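/- arXiv:0711.0560 — 3 statements merged into one kernel-verified Lean document; each statement's English description precedes it below -/
import Mathlib

section
/- Bilinear convolution estimate. For each α ∈ (1,2) there exists a constant c(α) such that for all continuous vector fields v, w : ℝ³ → ℝ³ with ‖v‖_α < ∞ and ‖w‖_α < ∞, the function u : ℝ³ → ℝ³ defined componentwise by u_i(x) = ∫_{ℝ³} ∂_k G_ij(x−y) v_j(y) w_k(y) dy (summation over j,k = 1,2,3) is well defined (the integral converges absolutely for every x) and satisfies ‖u‖_α ≤ c(α) ‖v‖_α ‖w‖_α. -/
open MeasureTheory Real Metric Filter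

noncomputable section

abbrev E3 : Type := EuclideanSpace ℝ (Fin 3)

def ee (j : Fin 3) : E3 := EuclideanSpace.single j 1

/-- the Green (Oseen) tensor of the Stokes operator -/
def G (i j : Fin 3) (x : E3) : ℝ :=
  (1 / (8 * π)) * ((if i = j then 1 else 0) / ‖x‖ + x i * x j / ‖x‖ ^ 3)

/-- `∂ₖ G_{ij}` -/
def dG (i j k : Fin 3) (x : E3) : ℝ := fderiv ℝ (G i j) x (ee k)

/-- the norm of the space `X_α` -/
def Xnorm (α : ℝ) (v : E3 → E3) : ℝ := ⨆ x : E3, (1 + ‖x‖) ^ α * ‖v x‖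

/-!
`G` is homogeneous of degree `-1` and smooth away from the origin, so `|∂ₖ G_{ij}(z)| ≤ K ‖z‖⁻²`,
and the product `v w` decays like `(1 + ‖y‖) ^ (-2α)`. Since `1 + ‖x‖ ≤ ‖x - y‖ + (1 + ‖y‖)`, the
weight `(1 + ‖x‖) ^ α` can be moved under the integral onto the larger of `‖x - y‖` and `1 + ‖y‖`.
What remains is bounded by a sum of two fixed integrable functions, one of `x - y` and one of `y`,
whose integrals do not depend on `x`.
-/

section PosHomogeneous

variable {V W : Type*} [NormedAddCommGroup V] [NormedSpace ℝ V]
  [NormedAddCommGroup W] [NormedSpace ℝ W] {s : ℝ} {f : V → W}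

/-- `f` is positively homogeneous of degree `s`. Only dilations by `r > 0` enter, so that `s` may be
any real number. -/
def IsPosHomogeneous (s : ℝ) (f : V → W) : Prop :=
  ∀ ⦃r : ℝ⦄, 0 < r → ∀ x, f (r • x) = r ^ s • f x

namespace IsPosHomogeneous

theorem map_zero (hf : IsPosHomogeneous s f) (hs : s ≠ 0) : f 0 = 0 := by
  by_contra h0
  have h2 : (2 : ℝ) ^ s • f 0 = (2 : ℝ) ^ (0 : ℝ) • f 0 := by
    rw [← hf two_pos, smul_zero, rpow_zero, one_smul]
  exact hs ((rpow_right_inj two_pos (by norm_num)).mp (smul_left_injective ℝ h0 h2))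

protected theorem fderiv (hf : IsPosHomogeneous s f) :
    IsPosHomogeneous (s - 1) (fderiv ℝ f) := by
  intro r hr x
  have hchain : r ^ s • fderiv ℝ f x = r • fderiv ℝ f (r • x) := by
    rw [← fderiv_comp_smul, ← Pi.smul_apply, ← fderiv_const_smul_field]
    exact congrArg (fderiv ℝ · x) (funext fun y => (hf hr y).symm)
  rw [rpow_sub_one hr.ne', div_eq_inv_mul, mul_smul, hchain, inv_smul_smul₀ hr.ne']

theorem exists_norm_le [FiniteDimensional ℝ V] (hf : IsPosHomogeneous s f) (hs : s ≠ 0)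
    (hcont : ContinuousOn f {0}ᶜ) : ∃ C, 0 ≤ C ∧ ∀ x, ‖f x‖ ≤ C * ‖x‖ ^ s := by
  obtain ⟨C, hC⟩ := (isCompact_sphere (0 : V) 1).exists_bound_of_continuousOn
    (hcont.mono fun x hx => ne_zero_of_mem_unit_sphere ⟨x, hx⟩)
  refine ⟨|C|, abs_nonneg C, fun x => ?_⟩
  -- At the origin of a singular kernel (`s < 0`) Lean's `0 ^ s` is `0`, and so is `f 0`.
  rcases eq_or_ne x 0 with rfl | hx
  · rw [hf.map_zero hs, norm_zero]
    positivity
  have hx0 : 0 < ‖x‖ := norm_pos_iff.mpr hx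
  have hmem : ‖x‖⁻¹ • x ∈ sphere (0 : V) 1 := by
    rw [mem_sphere_zero_iff_norm, norm_smul, norm_inv, norm_norm, inv_mul_cancel₀ hx0.ne']
  calc ‖f x‖ = ‖f (‖x‖ • ‖x‖⁻¹ • x)‖ := by rw [smul_inv_smul₀ hx0.ne']
    _ = ‖f (‖x‖⁻¹ • x)‖ * ‖x‖ ^ s := by
        rw [hf hx0, norm_smul, norm_of_nonneg (by positivity), mul_comm]
    _ ≤ |C| * ‖x‖ ^ s := by
        gcongr
        exact (hC _ hmem).trans (le_abs_self C)

end IsPosHomogeneous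

end PosHomogeneous

section OseenTensor

theorem isPosHomogeneous_G (i j : Fin 3) : IsPosHomogeneous (-1) (G i j) := by
  intro r hr x
  rcases eq_or_ne x 0 with rfl | hx
  · simp [G]
  have hx0 : ‖x‖ ≠ 0 := norm_ne_zero_iff.mpr hx
  simp only [G, norm_smul, norm_of_nonneg hr.le, PiLp.smul_apply, smul_eq_mul, rpow_neg_one]
  field_simp

theorem contDiffAt_G {n : WithTop ℕ∞} (i j : Fin 3) {x : E3} (hx : x ≠ 0) :
    ContDiffAt ℝ n (G i j) x := by
  have hnorm : ContDiffAt ℝ n (fun y : E3 => ‖y‖) x := contDiffAt_norm ℝ hx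
  have hcoord (l : Fin 3) : ContDiffAt ℝ n (fun y : E3 => y l) x :=
    (EuclideanSpace.proj (𝕜 := ℝ) l).contDiff.contDiffAt
  have hx0 : ‖x‖ ≠ 0 := norm_ne_zero_iff.mpr hx
  exact contDiffAt_const.mul ((contDiffAt_const.div hnorm hx0).add
    (((hcoord i).mul (hcoord j)).div (hnorm.pow 3) (pow_ne_zero 3 hx0)))

theorem isPosHomogeneous_dG (i j k : Fin 3) : IsPosHomogeneous (-2) (dG i j k) := by
  intro r hr x
  have h := congrArg (· (ee k)) ((isPosHomogeneous_G i j).fderiv hr x)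
  rwa [show (-1 : ℝ) - 1 = -2 by norm_num] at h

theorem continuousOn_dG (i j k : Fin 3) : ContinuousOn (dG i j k) {0}ᶜ := fun _ hx =>
  (((contDiffAt_G i j hx).continuousAt_fderiv one_ne_zero).clm_apply
    continuousAt_const).continuousWithinAt

theorem measurable_dG (i j k : Fin 3) : Measurable (dG i j k) :=
  measurable_fderiv_apply_const ℝ _ _

theorem exists_abs_dG_le :
    ∃ K, 0 ≤ K ∧ ∀ (i j k : Fin 3) (x : E3), |dG i j k x| ≤ K * ‖x‖ ^ (-2 : ℝ) := by
  have hhom : IsPosHomogeneous (-2) fun (x : E3) i j k => dG i j k x := fun r hr x => by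
    ext i j k
    exact isPosHomogeneous_dG i j k hr x
  have hcont : ContinuousOn (fun (x : E3) i j k => dG i j k x) {0}ᶜ :=
    continuousOn_pi.mpr fun i => continuousOn_pi.mpr fun j => continuousOn_pi.mpr fun k =>
      continuousOn_dG i j k
  obtain ⟨K, hK0, hK⟩ := hhom.exists_norm_le (by norm_num) hcont
  refine ⟨K, hK0, fun i j k x => le_trans ?_ (hK x)⟩
  calc |dG i j k x| ≤ ‖fun k => dG i j k x‖ := norm_le_pi_norm (fun k => dG i j k x) k
    _ ≤ ‖fun j k => dG i j k x‖ := norm_le_pi_norm (fun j k => dG i j k x) j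
    _ ≤ ‖fun i j k => dG i j k x‖ := norm_le_pi_norm (fun i j k => dG i j k x) i

end OseenTensor

section WeightedKernel

theorem rpow_mul_rpow_mul_rpow_le {a b c r s t : ℝ} (ht : 0 ≤ t) (hr : 0 ≤ r) (hs : 1 ≤ s)
    (htrs : t ≤ r + s) (hc : 0 ≤ c) (hca : c ≤ a) (hcb : c ≤ b) :
    t ^ c * (r ^ (-a) * s ^ (-b)) ≤
      2 ^ b * (r ^ (-a) * (1 + r) ^ (-(b - c))) + 2 ^ c * s ^ (-(a + b - c)) := by
  have hs0 : 0 < s := by linarith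
  rcases le_total r s with hrs | hsr
  · calc t ^ c * (r ^ (-a) * s ^ (-b)) ≤ (2 * s) ^ c * (r ^ (-a) * s ^ (-b)) := by
          gcongr
          linarith
      _ = 2 ^ c * (r ^ (-a) * s ^ (-(b - c))) := by
          rw [mul_rpow two_pos.le hs0.le, neg_sub, sub_eq_add_neg, rpow_add hs0]
          ring
      _ ≤ 2 ^ c * (r ^ (-a) * ((1 + r) / 2) ^ (-(b - c))) := by
          gcongr 2 ^ c * (r ^ (-a) * ?_)
          exact rpow_le_rpow_of_nonpos (by positivity) (by linarith) (by linarith)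
      _ = 2 ^ b * (r ^ (-a) * (1 + r) ^ (-(b - c))) := by
          have h2 : (2 : ℝ) ^ b = 2 ^ c * 2 ^ (b - c) := by
            rw [← rpow_add two_pos, add_sub_cancel]
          rw [div_rpow (by positivity) two_pos.le, rpow_neg two_pos.le, div_inv_eq_mul, h2]
          ring
      _ ≤ _ := le_add_of_nonneg_right (by positivity)
  · have hr0 : 0 < r := hs0.trans_le hsr
    calc t ^ c * (r ^ (-a) * s ^ (-b)) ≤ (2 * r) ^ c * (r ^ (-a) * s ^ (-b)) := by
          gcongr
          linarith
      _ = 2 ^ c * (r ^ (-(a - c)) * s ^ (-b)) := by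
          rw [mul_rpow two_pos.le hr, neg_sub, sub_eq_add_neg, rpow_add hr0]
          ring
      _ ≤ 2 ^ c * (s ^ (-(a - c)) * s ^ (-b)) := by
          gcongr 2 ^ c * (?_ * s ^ (-b))
          exact rpow_le_rpow_of_nonpos hs0 hsr (by linarith)
      _ = 2 ^ c * s ^ (-(a + b - c)) := by
          rw [← rpow_add hs0]
          ring_nf
      _ ≤ _ := le_add_of_nonneg_left (by positivity)

variable {V : Type*} [NormedAddCommGroup V] [NormedSpace ℝ V] [FiniteDimensional ℝ V]
  [Nontrivial V] [MeasurableSpace V] [BorelSpace V] (μ : Measure V) [μ.IsAddHaarMeasure]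

theorem integrable_norm_rpow_mul_one_add_norm_rpow {a b : ℝ} (ha : a < Module.finrank ℝ V)
    (hab : Module.finrank ℝ V < a + b) :
    Integrable (fun x : V => ‖x‖ ^ (-a) * (1 + ‖x‖) ^ (-b)) μ := by
  have hcont : ContinuousOn (fun r : ℝ => (1 + r) ^ (-b)) (Set.Ici 0) := fun r hr =>
    ((continuousAt_const.add continuousAt_id).rpow_const
      (Or.inl (by linarith [Set.mem_Ici.mp hr] : 1 + r ≠ 0))).continuousWithinAt
  have htop : (fun r : ℝ => (1 + r) ^ (-b)) =O[atTop] (· ^ (-b)) := by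
    refine Asymptotics.IsBigO.of_bound' ?_
    filter_upwards [eventually_gt_atTop 0] with r hr
    rw [norm_of_nonneg (by positivity), norm_of_nonneg (by positivity)]
    exact rpow_le_rpow_of_nonpos hr (by linarith) (by linarith)
  have hzero : (fun r : ℝ => (1 + r) ^ (-b)) =O[nhdsWithin 0 (Set.Ioi 0)] (· ^ (-(0 : ℝ))) := by
    simpa using ((hcont 0 Set.self_mem_Ici).mono Set.Ioi_subset_Ici_self).isBigO_one ℝ
  have hmellin := mellin_convergent_of_isBigO_scalar
    ((hcont.mono Set.Ioi_subset_Ici_self).locallyIntegrableOn measurableSet_Ioi)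
    htop (sub_lt_iff_lt_add'.mpr hab) hzero (sub_pos.mpr ha)
  rw [integrable_fun_norm_addHaar μ (f := fun r => r ^ (-a) * (1 + r) ^ (-b))]
  refine hmellin.congr_fun (fun r (hr : 0 < r) => ?_) measurableSet_Ioi
  have hdim : ((Module.finrank ℝ V - 1 : ℕ) : ℝ) = Module.finrank ℝ V - 1 := by
    rw [Nat.cast_sub Module.finrank_pos, Nat.cast_one]
  simp only [smul_eq_mul]
  rw [← mul_assoc, ← rpow_natCast, ← rpow_add hr, hdim]
  ring_nf

theorem exists_integral_norm_sub_rpow_mul_one_add_norm_rpow_le {a b c : ℝ} (hc : 0 ≤ c)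
    (hca : c ≤ a) (ha : a < Module.finrank ℝ V) (habc : Module.finrank ℝ V < a + b - c) :
    ∃ M : ℝ, ∀ x : V,
      Integrable (fun y => ‖x - y‖ ^ (-a) * (1 + ‖y‖) ^ (-b)) μ ∧
        ∫ y, ‖x - y‖ ^ (-a) * (1 + ‖y‖) ^ (-b) ∂μ ≤ M * (1 + ‖x‖) ^ (-c) := by
  set near : V → ℝ := fun z => ‖z‖ ^ (-a) * (1 + ‖z‖) ^ (-(b - c))
  set far : V → ℝ := fun y => (1 + ‖y‖) ^ (-(a + b - c))
  have hnear : Integrable near μ :=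
    integrable_norm_rpow_mul_one_add_norm_rpow μ ha (by linarith)
  have hfar : Integrable far μ := integrable_one_add_norm habc
  refine ⟨2 ^ b * ∫ z, near z ∂μ + 2 ^ c * ∫ y, far y ∂μ, fun x => ?_⟩
  have hnear_sub := (hnear.comp_sub_left x).const_mul (2 ^ b)
  have hfar_mul := hfar.const_mul (2 ^ c)
  have hmajorant : Integrable
      (fun y => (1 + ‖x‖) ^ (-c) * (2 ^ b * near (x - y) + 2 ^ c * far y)) μ :=
    (hnear_sub.add hfar_mul).const_mul _
  have hle (y : V) : ‖x - y‖ ^ (-a) * (1 + ‖y‖) ^ (-b) ≤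
      (1 + ‖x‖) ^ (-c) * (2 ^ b * near (x - y) + 2 ^ c * far y) := by
    rw [rpow_neg (by positivity : 0 ≤ 1 + ‖x‖) c, inv_mul_eq_div, le_div_iff₀' (by positivity)]
    refine rpow_mul_rpow_mul_rpow_le (by positivity) (norm_nonneg _)
      (le_add_of_nonneg_right (norm_nonneg y)) ?_ hc hca (by linarith)
    linarith [norm_le_norm_sub_add x y]
  have hint : Integrable (fun y => ‖x - y‖ ^ (-a) * (1 + ‖y‖) ^ (-b)) μ :=
    hmajorant.mono' (by fun_prop) (.of_forall fun y =>
      (norm_of_nonneg (by positivity)).trans_le (hle y))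
  refine ⟨hint, (integral_mono hint hmajorant hle).trans_eq ?_⟩
  rw [integral_const_mul, integral_add hnear_sub hfar_mul, integral_const_mul, integral_const_mul,
    integral_sub_left_eq_self near μ x, mul_comm]

end WeightedKernel

section Integrand

theorem norm_sum_sum_mul_mul_le {ι : Type*} [Fintype ι] {A : ι → ι → ℝ} {B : ℝ}
    (hA : ∀ j k, ‖A j k‖ ≤ B) (p q : EuclideanSpace ℝ ι) :
    ‖∑ j, ∑ k, A j k * p j * q k‖ ≤ Fintype.card ι ^ 2 * B * ‖p‖ * ‖q‖ := by
  have hterm (j k : ι) : ‖A j k * p j * q k‖ ≤ B * ‖p‖ * ‖q‖ := by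
    have hB : 0 ≤ B := (norm_nonneg _).trans (hA j k)
    rw [norm_mul, norm_mul]
    gcongr
    exacts [hA j k, PiLp.norm_apply_le p j, PiLp.norm_apply_le q k]
  calc ‖∑ j, ∑ k, A j k * p j * q k‖ ≤ ∑ _j : ι, ∑ _k : ι, B * ‖p‖ * ‖q‖ :=
        norm_sum_le_of_le _ fun j _ => norm_sum_le_of_le _ fun k _ => hterm j k
    _ = Fintype.card ι ^ 2 * B * ‖p‖ * ‖q‖ := by
        simp only [Finset.sum_const, Finset.card_univ, nsmul_eq_mul]
        ring

theorem norm_le_sqrt_card_mul_of_abs_apply_le {ι : Type*} [Fintype ι] [Nonempty ι]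
    {p : EuclideanSpace ℝ ι} {B : ℝ} (hp : ∀ i, |p i| ≤ B) : ‖p‖ ≤ √(Fintype.card ι) * B := by
  refine ((EuclideanSpace.basisFun ι ℝ).norm_le_card_mul_iSup_norm_inner p).trans
    (mul_le_mul_of_nonneg_left (ciSup_le fun i => ?_) (sqrt_nonneg _))
  simpa using hp i

theorem Xnorm_nonneg (α : ℝ) (v : E3 → E3) : 0 ≤ Xnorm α v :=
  Real.iSup_nonneg fun _ => by positivity

theorem norm_le_Xnorm_mul_rpow {α : ℝ} {v : E3 → E3}
    (hv : BddAbove (Set.range fun x : E3 => (1 + ‖x‖) ^ α * ‖v x‖)) (y : E3) :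
    ‖v y‖ ≤ Xnorm α v * (1 + ‖y‖) ^ (-α) := by
  rw [rpow_neg (by positivity), ← div_eq_mul_inv, le_div_iff₀' (by positivity)]
  exact le_ciSup hv y

theorem Xnorm_le {α B : ℝ} {v : E3 → E3} (hv : ∀ x, ‖v x‖ ≤ B * (1 + ‖x‖) ^ (-α)) :
    Xnorm α v ≤ B := ciSup_le fun x => by
  rw [← le_div_iff₀' (by positivity), div_eq_mul_inv, ← rpow_neg (by positivity)]
  exact hv x

theorem aestronglyMeasurable_integrand {v w : E3 → E3} (hv : AEStronglyMeasurable v)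
    (hw : AEStronglyMeasurable w) (x : E3) (i : Fin 3) :
    AEStronglyMeasurable (fun y : E3 => ∑ j, ∑ k, dG i j k (x - y) * v y j * w y k) := by
  have hcoord {f : E3 → E3} (hf : AEStronglyMeasurable f) (j : Fin 3) :
      AEStronglyMeasurable fun y => f y j :=
    (EuclideanSpace.proj (𝕜 := ℝ) j).continuous.comp_aestronglyMeasurable hf
  have hkernel (j k : Fin 3) : AEStronglyMeasurable fun y : E3 => dG i j k (x - y) :=
    ((measurable_dG i j k).comp (measurable_const.sub measurable_id)).aestronglyMeasurable
  exact Finset.aestronglyMeasurable_fun_sum _ fun j _ => Finset.aestronglyMeasurable_fun_sum _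
    fun k _ => ((hkernel j k).mul (hcoord hv j)).mul (hcoord hw k)

theorem norm_integrand_le {α β K : ℝ}
    (hK : ∀ (i j k : Fin 3) (x : E3), |dG i j k x| ≤ K * ‖x‖ ^ (-2 : ℝ)) {v w : E3 → E3}
    (hv : BddAbove (Set.range fun x : E3 => (1 + ‖x‖) ^ α * ‖v x‖))
    (hw : BddAbove (Set.range fun x : E3 => (1 + ‖x‖) ^ β * ‖w x‖)) (i : Fin 3) (x y : E3) :
    ‖∑ j, ∑ k, dG i j k (x - y) * v y j * w y k‖ ≤
      9 * K * Xnorm α v * Xnorm β w * (‖x - y‖ ^ (-2 : ℝ) * (1 + ‖y‖) ^ (-(α + β))) := by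
  have hB : 0 ≤ K * ‖x - y‖ ^ (-2 : ℝ) := (abs_nonneg _).trans (hK i i i (x - y))
  have hV := Xnorm_nonneg α v
  calc ‖∑ j, ∑ k, dG i j k (x - y) * v y j * w y k‖
      ≤ (Fintype.card (Fin 3) : ℝ) ^ 2 * (K * ‖x - y‖ ^ (-2 : ℝ)) * ‖v y‖ * ‖w y‖ :=
        norm_sum_sum_mul_mul_le (fun j k => hK i j k (x - y)) (v y) (w y)
    _ ≤ (Fintype.card (Fin 3) : ℝ) ^ 2 * (K * ‖x - y‖ ^ (-2 : ℝ)) *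
          (Xnorm α v * (1 + ‖y‖) ^ (-α)) * (Xnorm β w * (1 + ‖y‖) ^ (-β)) := by
        gcongr
        exacts [norm_le_Xnorm_mul_rpow hv y, norm_le_Xnorm_mul_rpow hw y]
    _ = 9 * K * Xnorm α v * Xnorm β w * (‖x - y‖ ^ (-2 : ℝ) * (1 + ‖y‖) ^ (-(α + β))) := by
        rw [neg_add, rpow_add (by positivity), Fintype.card_fin]
        push_cast
        ring

end Integrand

theorem bilinear_convolution_estimate_general {α β γ : ℝ} (hγ0 : 0 ≤ γ) (hγ2 : γ ≤ 2)
    (hαβ : γ + 1 < α + β) :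
    ∃ c : ℝ, ∀ v w : E3 → E3, AEStronglyMeasurable v → AEStronglyMeasurable w →
      BddAbove (Set.range fun x : E3 => (1 + ‖x‖) ^ α * ‖v x‖) →
      BddAbove (Set.range fun x : E3 => (1 + ‖x‖) ^ β * ‖w x‖) →
      (∀ (x : E3) (i : Fin 3),
        Integrable (fun y : E3 => ∑ j, ∑ k, dG i j k (x - y) * v y j * w y k)) ∧
      (∀ u : E3 → E3,
        (∀ (x : E3) (i : Fin 3),
          u x i = ∫ y : E3, ∑ j, ∑ k, dG i j k (x - y) * v y j * w y k) →
        Xnorm γ u ≤ c * Xnorm α v * Xnorm β w) := by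
  obtain ⟨K, hK0, hK⟩ := exists_abs_dG_le
  have hdim : (Module.finrank ℝ E3 : ℝ) = 3 := by simp
  obtain ⟨M, hM⟩ := exists_integral_norm_sub_rpow_mul_one_add_norm_rpow_le (V := E3) volume
    (a := 2) (b := α + β) hγ0 hγ2 (by linarith) (by linarith)
  refine ⟨√3 * 9 * K * M, fun v w hvm hwm hv hw => ?_⟩
  set A := 9 * K * Xnorm α v * Xnorm β w with hA
  have hA0 : 0 ≤ A :=
    mul_nonneg (mul_nonneg (by positivity) (Xnorm_nonneg α v)) (Xnorm_nonneg β w)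
  have hmajorant (x : E3) := (hM x).1.const_mul A
  have hle (x : E3) (i : Fin 3) := ae_of_all volume (norm_integrand_le hK hv hw i x)
  refine ⟨fun x i => (hmajorant x).mono' (aestronglyMeasurable_integrand hvm hwm x i) (hle x i),
    fun u hu => Xnorm_le fun x => ?_⟩
  have hcoord (i : Fin 3) : |u x i| ≤ A * (M * (1 + ‖x‖) ^ (-γ)) := by
    rw [hu x i]
    refine (norm_integral_le_of_norm_le (hmajorant x) (hle x i)).trans ?_
    rw [integral_const_mul]
    exact mul_le_mul_of_nonneg_left (hM x).2 hA0
  refine (norm_le_sqrt_card_mul_of_abs_apply_le hcoord).trans_eq ?_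
  rw [hA, Fintype.card_fin]
  push_cast
  ring

theorem bilinear_convolution_estimate (α : ℝ) (hα1 : 1 < α) (hα2 : α < 2) :
    ∃ c : ℝ, ∀ v w : E3 → E3, Continuous v → Continuous w →
      BddAbove (Set.range fun x : E3 => (1 + ‖x‖) ^ α * ‖v x‖) →
      BddAbove (Set.range fun x : E3 => (1 + ‖x‖) ^ α * ‖w x‖) →
      (∀ (x : E3) (i : Fin 3),
        Integrable (fun y : E3 => ∑ j, ∑ k, dG i j k (x - y) * v y j * w y k)) ∧
      (∀ u : E3 → E3,
        (∀ (x : E3) (i : Fin 3),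
          u x i = ∫ y : E3, ∑ j, ∑ k, dG i j k (x - y) * v y j * w y k) →
        Xnorm α u ≤ c * Xnorm α v * Xnorm α w) := by
  obtain ⟨c, hc⟩ := bilinear_convolution_estimate_general (α := α) (β := α) (by linarith) hα2.le
    (by linarith)
  exact ⟨c, fun v w hv hw => hc v w hv.aestronglyMeasurable hw.aestronglyMeasurable⟩
end
end

section
/- Key integral estimate. For each α ∈ (1,2) and each β ∈ {1, α} there exists a constant c(α) such that for every x ∈ ℝ³, the integral I(x) = ∫_{ℝ³} |x−y|^{−2} (1+|y|)^{−(α+β)} dy is finite and satisfies (1+|x|)^α I(x) ≤ c(α). -/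
open MeasureTheory Real Metric Filter

noncomputable section

/-!
Put `r = 1 + ‖x‖ ≤ ‖x - y‖ + (1 + ‖y‖)`. Whichever of the two distances `‖x - y‖` and `1 + ‖y‖` is
the larger is comparable to `r` plus the smaller one, so the integrand is dominated by a sum of two
radial weights of scale `r`, one centred at `x` and the other at the origin. These weights are
integrable and homogeneous, so scaling out `r` gives the power of `1 + ‖x‖` with an integral that
does not depend on `x`.
-/

theorem rpow_neg_le_mul_rpow_neg {c u v p : ℝ} (hc : 0 < c) (hu : 0 < u) (h : u ≤ c * v)
    (hp : 0 ≤ p) : v ^ (-p) ≤ c ^ p * u ^ (-p) := by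
  have hv : 0 < v := pos_of_mul_pos_right (hu.trans_le h) hc.le
  calc v ^ (-p) = c ^ p * (c * v) ^ (-p) := by
        rw [mul_rpow hc.le hv.le, ← mul_assoc, ← rpow_add hc, add_neg_cancel, rpow_zero, one_mul]
    _ ≤ c ^ p * u ^ (-p) :=
        mul_le_mul_of_nonneg_left (rpow_le_rpow_of_nonpos hu h (neg_nonpos.2 hp)) (by positivity)

theorem integrableOn_Ioi_rpow_mul_add_rpow_neg {b r s : ℝ} (hr : 0 < r) (hs : 0 < s) (hsb : s < b) :
    IntegrableOn (fun t : ℝ => t ^ (s - 1) * (r + t) ^ (-b)) (Set.Ioi 0) := by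
  have hb : -b ≤ 0 := by linarith
  have hcont : ContinuousOn (fun t : ℝ => (r + t) ^ (-b)) (Set.Ioi 0) :=
    ContinuousOn.rpow_const (by fun_prop) fun t (ht : 0 < t) => .inl (by positivity)
  have hle_rpow {t : ℝ} (ht : 0 < t) : (r + t) ^ (-b) ≤ t ^ (-b) :=
    rpow_le_rpow_of_nonpos ht (by linarith) hb
  have hle_const {t : ℝ} (ht : 0 < t) : (r + t) ^ (-b) ≤ r ^ (-b) :=
    rpow_le_rpow_of_nonpos hr (by linarith) hb
  refine mellin_convergent_of_isBigO_scalar (hcont.locallyIntegrableOn measurableSet_Ioi)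
    (.of_bound 1 ?_) hsb (b := 0) (.of_bound (r ^ (-b)) ?_) hs
  · filter_upwards [eventually_gt_atTop 0] with t ht
    rw [one_mul, norm_of_nonneg (by positivity), norm_of_nonneg (by positivity)]
    exact hle_rpow ht
  · filter_upwards [self_mem_nhdsWithin] with t (ht : 0 < t)
    rw [neg_zero, rpow_zero, norm_one, mul_one, norm_of_nonneg (by positivity)]
    exact hle_const ht

section NormedGroup

variable {E : Type*} [NormedAddCommGroup E]

/-- The radial weight with a singularity of order `a` at the origin and decay of order `a + b` at
infinity, the transition taking place at the scale `r`. Two such weights dominate the integrand of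
the estimate. For `a ≠ 0` the value at the origin is `0`, since `0 ^ (-a) = 0`, so the domination
holds only almost everywhere. -/
def radialWeight (a b r : ℝ) (z : E) : ℝ := ‖z‖ ^ (-a) * (r + ‖z‖) ^ (-b)

theorem norm_sub_rpow_mul_one_add_norm_rpow_le {a b q : ℝ} (ha : 0 ≤ a) (hb : 0 ≤ b) (hbq : b ≤ q)
    (x : E) {y : E} (hy : y ≠ 0) :
    ‖x - y‖ ^ (-a) * (1 + ‖y‖) ^ (-q) ≤
      3 ^ b * radialWeight a b (1 + ‖x‖) (x - y) + 3 ^ a * radialWeight b a (1 + ‖x‖) y := by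
  have hx : ‖x‖ ≤ ‖x - y‖ + ‖y‖ := by simpa only [sub_add_cancel] using norm_add_le (x - y) y
  have hy₀ : 0 < ‖y‖ := norm_pos_iff.2 hy
  have hq : (1 + ‖y‖) ^ (-q) ≤ (1 + ‖y‖) ^ (-b) :=
    rpow_le_rpow_of_exponent_le (by linarith) (neg_le_neg hbq)
  unfold radialWeight
  rcases le_total ‖x - y‖ (1 + ‖y‖) with h | h
  · have hfar : (1 + ‖y‖) ^ (-b) ≤ 3 ^ b * (1 + ‖x‖ + ‖x - y‖) ^ (-b) :=
      rpow_neg_le_mul_rpow_neg (by norm_num) (by positivity) (by linarith) hb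
    calc ‖x - y‖ ^ (-a) * (1 + ‖y‖) ^ (-q)
        ≤ ‖x - y‖ ^ (-a) * (3 ^ b * (1 + ‖x‖ + ‖x - y‖) ^ (-b)) := by
          gcongr
          exact hq.trans hfar
      _ = 3 ^ b * (‖x - y‖ ^ (-a) * (1 + ‖x‖ + ‖x - y‖) ^ (-b)) := by ring
      _ ≤ _ := le_add_of_nonneg_right (by positivity)
  · have hfar : ‖x - y‖ ^ (-a) ≤ 3 ^ a * (1 + ‖x‖ + ‖y‖) ^ (-a) :=
      rpow_neg_le_mul_rpow_neg (by norm_num) (by positivity) (by linarith) ha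
    have hnear : (1 + ‖y‖) ^ (-b) ≤ ‖y‖ ^ (-b) :=
      rpow_le_rpow_of_nonpos hy₀ (by linarith) (neg_nonpos.2 hb)
    calc ‖x - y‖ ^ (-a) * (1 + ‖y‖) ^ (-q)
        ≤ 3 ^ a * (1 + ‖x‖ + ‖y‖) ^ (-a) * ‖y‖ ^ (-b) := by
          gcongr
          exact hq.trans hnear
      _ = 3 ^ a * (‖y‖ ^ (-b) * (1 + ‖x‖ + ‖y‖) ^ (-a)) := by ring
      _ ≤ _ := le_add_of_nonneg_left (by positivity)

variable [NormedSpace ℝ E]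

theorem radialWeight_mul_smul {r s : ℝ} (hr : 0 < r) (hs : 0 ≤ s) (a b : ℝ) (z : E) :
    radialWeight a b (r * s) (r • z) = r ^ (-(a + b)) * radialWeight a b s z := by
  unfold radialWeight
  rw [norm_smul, norm_of_nonneg hr.le, ← mul_add, mul_rpow hr.le (norm_nonneg z),
    mul_rpow hr.le (by positivity), neg_add, rpow_add hr]
  ring

end NormedGroup

section HaarMeasure

variable {E : Type*} [NormedAddCommGroup E] [NormedSpace ℝ E] [FiniteDimensional ℝ E]
  [MeasurableSpace E] [BorelSpace E] (μ : Measure E) [μ.IsAddHaarMeasure] {a b r : ℝ}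

theorem integrable_radialWeight (ha : a < Module.finrank ℝ E) (hab : Module.finrank ℝ E < a + b)
    (hr : 0 < r) : Integrable (radialWeight a b r : E → ℝ) μ := by
  rcases subsingleton_or_nontrivial E with _ | _
  · exact .of_finite
  refine (integrable_fun_norm_addHaar μ (f := fun t => t ^ (-a) * (r + t) ^ (-b))).2 <|
    (integrableOn_Ioi_rpow_mul_add_rpow_neg hr (sub_pos.2 ha) (sub_lt_iff_lt_add'.2 hab)).congr_fun
      (fun t (ht : 0 < t) => ?_) measurableSet_Ioi
  have hpow : t ^ (Module.finrank ℝ E - a - 1) = t ^ (Module.finrank ℝ E - 1) * t ^ (-a) := by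
    rw [← rpow_natCast, ← rpow_add ht, Nat.cast_pred Module.finrank_pos]
    ring_nf
  simp only [hpow, smul_eq_mul, mul_assoc]

theorem integral_radialWeight (hr : 0 < r) (a b : ℝ) :
    ∫ z, radialWeight a b r z ∂μ =
      r ^ (Module.finrank ℝ E - (a + b)) * ∫ z, radialWeight a b 1 z ∂μ := by
  calc ∫ z, radialWeight a b r z ∂μ
      = ∫ z, r ^ (-(a + b)) * radialWeight a b 1 (r⁻¹ • z) ∂μ := by
        refine integral_congr_ae (.of_forall fun z => ?_)
        simp only [← radialWeight_mul_smul hr zero_le_one, mul_one, smul_inv_smul₀ hr.ne']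
    _ = r ^ (Module.finrank ℝ E - (a + b)) * ∫ z, radialWeight a b 1 z ∂μ := by
        rw [integral_const_mul, Measure.integral_comp_inv_smul_of_nonneg μ _ hr.le, smul_eq_mul,
          ← mul_assoc, ← rpow_natCast, ← rpow_add hr, neg_add_eq_sub]

theorem integrable_radialWeight_sub_add (ha : a < Module.finrank ℝ E)
    (hb : b < Module.finrank ℝ E) (hab : Module.finrank ℝ E < a + b) (hr : 0 < r) (x : E)
    (C D : ℝ) :
    Integrable (fun y => C * radialWeight a b r (x - y) + D * radialWeight b a r y) μ :=
  (((integrable_radialWeight μ ha hab hr).comp_sub_left x).const_mul C).add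
    ((integrable_radialWeight μ hb (add_comm a b ▸ hab) hr).const_mul D)

theorem integral_radialWeight_sub_add (ha : a < Module.finrank ℝ E)
    (hb : b < Module.finrank ℝ E) (hab : Module.finrank ℝ E < a + b) (hr : 0 < r) (x : E)
    (C D : ℝ) :
    ∫ y, (C * radialWeight a b r (x - y) + D * radialWeight b a r y) ∂μ =
      r ^ (Module.finrank ℝ E - (a + b)) *
        (C * ∫ z, radialWeight a b 1 z ∂μ + D * ∫ z, radialWeight b a 1 z ∂μ) := by
  have hsub := (integrable_radialWeight μ ha hab hr).comp_sub_left x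
  have hself := integrable_radialWeight μ hb (add_comm a b ▸ hab) hr
  rw [integral_add (hsub.const_mul C) (hself.const_mul D), integral_const_mul,
    integral_const_mul, integral_sub_left_eq_self (radialWeight a b r) μ x,
    integral_radialWeight μ hr, integral_radialWeight μ hr, add_comm b a]
  ring

theorem key_integral_estimate_general (ha : a < Module.finrank ℝ E)
    (hb : b < Module.finrank ℝ E) (hab : Module.finrank ℝ E < a + b) :
    ∃ c : ℝ, ∀ q : ℝ, b ≤ q → ∀ x : E,
      Integrable (fun y => ‖x - y‖ ^ (-a) * (1 + ‖y‖) ^ (-q)) μ ∧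
      (1 + ‖x‖) ^ (a + b - Module.finrank ℝ E) *
        (∫ y, ‖x - y‖ ^ (-a) * (1 + ‖y‖) ^ (-q) ∂μ) ≤ c := by
  have ha₀ : 0 < a := by linarith
  have hb₀ : 0 < b := by linarith
  have : Nontrivial E :=
    Module.nontrivial_of_finrank_pos (R := ℝ) (Nat.cast_pos.1 (ha₀.trans ha))
  refine ⟨3 ^ b * ∫ z, radialWeight a b 1 z ∂μ + 3 ^ a * ∫ z, radialWeight b a 1 z ∂μ,
    fun q hbq x => ?_⟩
  have hr : 0 < 1 + ‖x‖ := by positivity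
  have hdom := integrable_radialWeight_sub_add μ ha hb hab hr x (3 ^ b) (3 ^ a)
  have hle : ∀ᵐ y ∂μ, ‖x - y‖ ^ (-a) * (1 + ‖y‖) ^ (-q) ≤
      3 ^ b * radialWeight a b (1 + ‖x‖) (x - y) + 3 ^ a * radialWeight b a (1 + ‖x‖) y := by
    filter_upwards [Measure.ae_ne μ 0] with y hy
    exact norm_sub_rpow_mul_one_add_norm_rpow_le ha₀.le hb₀.le hbq x hy
  have hint : Integrable (fun y => ‖x - y‖ ^ (-a) * (1 + ‖y‖) ^ (-q)) μ := by
    refine hdom.mono' (by fun_prop) ?_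
    filter_upwards [hle] with y hy
    rwa [norm_of_nonneg (by positivity)]
  refine ⟨hint, ?_⟩
  calc _ ≤ (1 + ‖x‖) ^ (a + b - Module.finrank ℝ E) * _ :=
        mul_le_mul_of_nonneg_left (integral_mono_ae hint hdom hle) (by positivity)
    _ = _ := by
        rw [integral_radialWeight_sub_add μ ha hb hab hr, ← mul_assoc, ← rpow_add hr,
          sub_add_sub_cancel, sub_self, rpow_zero, one_mul]

end HaarMeasure

theorem key_integral_estimate (α : ℝ) (hα1 : 1 < α) (hα2 : α < 2) :
    ∃ c : ℝ, ∀ β : ℝ, (β = 1 ∨ β = α) → ∀ x : E3,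
      Integrable (fun y : E3 => ‖x - y‖ ^ (-2 : ℝ) * (1 + ‖y‖) ^ (-(α + β))) ∧
      (1 + ‖x‖) ^ α * (∫ y : E3, ‖x - y‖ ^ (-2 : ℝ) * (1 + ‖y‖) ^ (-(α + β))) ≤ c := by
  have hdim : (Module.finrank ℝ E3 : ℝ) = 3 := by simp
  have hexp : 2 + (α + 1) - Module.finrank ℝ E3 = α := by linarith
  obtain ⟨c, hc⟩ := key_integral_estimate_general (volume : Measure E3) (a := 2) (b := α + 1)
    (by linarith) (by linarith) (by linarith)
  rw [hexp] at hc
  exact ⟨c, fun β hβ => hc (α + β) (by rcases hβ with rfl | rfl <;> linarith)⟩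
end
end

section
/- Derivative decay for exterior solutions. For every M > 0 and every integer k ≥ 1 there exists a constant c(k,M) such that: if R₀ > 0, (u,p) is a smooth solution of the steady Navier–Stokes equations on ℝ³ \ closedBall(0,R₀), and |u(x)| ≤ C*/(R₀+|x|) on ℝ³ \ closedBall(0,R₀) for some constant C* ≤ M, then |∇^k u(x)| ≤ c(k,M) C*/(R₀+|x|)^{k+1} for all x with |x| ≥ 2R₀. -/
open MeasureTheory Real Metric Filter

noncomputable section

def pd (f : E3 → ℝ) (j : Fin 3) (x : E3) : ℝ := fderiv ℝ f x (ee j)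

def pd2 (f : E3 → ℝ) (j : Fin 3) (x : E3) : ℝ :=
  fderiv ℝ (fun y => fderiv ℝ f y (ee j)) x (ee j)

/-- steady Navier–Stokes system on `s` -/
def IsNS (s : Set E3) (u : E3 → E3) (p : E3 → ℝ) : Prop :=
  (∀ x ∈ s, ∀ i, -(∑ j, pd2 (fun y => u y i) j x)
      + (∑ j, u x j * pd (fun y => u y i) j x) + pd p i x = 0)
  ∧ ∀ x ∈ s, (∑ j, pd (fun y => u y j) j x) = 0

/-!
The operator `Δ - ∇ div` annihilates `∇ p` and agrees with `Δ` on the divergence-free field `Δ u`.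
Applied to the momentum equation `Δ u = div (u ⊗ u) + ∇ p` it therefore removes the pressure and
leaves `Δ² u = ∑ ∂ᵢ ∂ⱼ ∂ₖ Qᵢⱼₖ(u, u)` with constant bilinear forms `Qᵢⱼₖ`.

The gain of derivatives comes from averages: if a radial bump `φ` of mass one has a potential `ψ`
with `∇ Δ ψ(z) = -φ(z) z`, then the average of `f` at scale `t` with weight `φ` has `t`-derivative
`t³` times the average of `Δ² f` with weight `ψ`, and the three derivatives outside the flux can be
moved onto `ψ` at the price of exactly this `t³`. Integrating from `0` to `ε` bounds `∇ⁿ⁺¹ u` at a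
point by `ε⁻¹ sup |∇ⁿ u| + ε sup |∇ⁿ⁺¹ Q(u, u)|` over the `ε`-ball. The top-order part of the last
term is absorbed by evaluating at a maximum of the product of `|∇ⁿ⁺¹ u|` with the distance to the
boundary, and induction on the order gives `|∇ᵏ u(x)| ≤ c N / rᵏ` whenever `|u| ≤ N` on the ball of
radius `r` about `x` and `N r ≤ M`. In the exterior domain this applies with `r` comparable to
`R₀ + |x|` and `N` comparable to `C* / (R₀ + |x|)`.
-/

open scoped ContDiff Topology InnerProductSpace Laplacian Gradient

section DirDeriv

variable {ι E V W : Type*} [NormedAddCommGroup E] [NormedSpace ℝ E]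
  [NormedAddCommGroup V] [NormedSpace ℝ V] [NormedAddCommGroup W] [NormedSpace ℝ W]

/-- The directional derivative `∂ᵥ f` of `f` along the constant vector field `v`. -/
def dirDeriv (v : E) (f : E → V) : E → V := fun x => fderiv ℝ f x v

variable {f : E → V} {s : Set E}

theorem contDiff_dirDeriv (hf : ContDiff ℝ ∞ f) (v : E) : ContDiff ℝ ∞ (dirDeriv v f) :=
  (hf.fderiv_right (m := ∞) (by simp)).clm_apply contDiff_const

theorem tsupport_dirDeriv_subset (f : E → V) (v : E) : tsupport (dirDeriv v f) ⊆ tsupport f :=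
  tsupport_fderiv_apply_subset ℝ v

theorem dirDeriv_eqOn {g : E → V} (hs : IsOpen s) (h : Set.EqOn f g s) (v : E) :
    Set.EqOn (dirDeriv v f) (dirDeriv v g) s := fun x hx => by
  rw [dirDeriv, dirDeriv, (h.eventuallyEq_of_mem (hs.mem_nhds hx)).fderiv_eq]

theorem dirDeriv_clm_comp (L : V →L[ℝ] W) (hf : ContDiff ℝ ∞ f) (v : E) :
    dirDeriv v (fun x => L (f x)) = fun x => L (dirDeriv v f x) := by
  ext x
  have := (L.hasFDerivAt.comp x (hf.differentiable (by simp) x).hasFDerivAt).fderiv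
  exact congrArg (· v) this

theorem contDiff_fderiv (hf : ContDiff ℝ ∞ f) : ContDiff ℝ ∞ (fderiv ℝ f) :=
  hf.fderiv_right (by simp)

theorem contDiff_iteratedFDeriv (hf : ContDiff ℝ ∞ f) (n : ℕ) :
    ContDiff ℝ ∞ (iteratedFDeriv ℝ n f) :=
  hf.iteratedFDeriv_right (by norm_cast)

theorem dirDeriv_comm (hf : ContDiff ℝ ∞ f) (v w : E) :
    dirDeriv v (dirDeriv w f) = dirDeriv w (dirDeriv v f) := by
  have hd (v w : E) (x : E) : dirDeriv v (dirDeriv w f) x = fderiv ℝ (fderiv ℝ f) x v w :=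
    congrFun (dirDeriv_clm_comp (.apply ℝ V w) (contDiff_fderiv hf) v) x
  ext x
  rw [hd, hd]
  exact hf.contDiffAt.isSymmSndFDerivAt (by simpa using ENat.LEInfty.out) v w

theorem fderiv_dirDeriv (hf : ContDiff ℝ ∞ f) (v : E) :
    fderiv ℝ (dirDeriv v f) = dirDeriv v (fderiv ℝ f) := by
  ext x w
  exact (congrFun (dirDeriv_comm hf w v) x).trans
    (congrFun (dirDeriv_clm_comp (.apply ℝ V w) (contDiff_fderiv hf) v) x)

theorem dirDeriv_sum [Fintype ι] {f : ι → E → V} (hf : ∀ i, ContDiff ℝ ∞ (f i)) (v : E) :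
    dirDeriv v (fun x => ∑ i, f i x) = fun x => ∑ i, dirDeriv v (f i) x := by
  ext x
  simp [dirDeriv, fderiv_fun_sum fun i _ => (hf i).differentiable (by simp) x]

theorem dirDeriv_smul {c : E → ℝ} (hc : ContDiff ℝ ∞ c) (hf : ContDiff ℝ ∞ f) (v : E) :
    dirDeriv v (fun x => c x • f x) = fun x => c x • dirDeriv v f x + dirDeriv v c x • f x := by
  ext x
  simp [dirDeriv, fderiv_fun_smul (hc.differentiable (by simp) x) (hf.differentiable (by simp) x)]

/-- The iterated directional derivative `∂_{v₁} ⋯ ∂_{vₙ} f` along the list `[v₁, …, vₙ]`. -/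
def iterDirDeriv (l : List E) (f : E → V) : E → V := l.foldr dirDeriv f

theorem contDiff_iterDirDeriv (hf : ContDiff ℝ ∞ f) (l : List E) :
    ContDiff ℝ ∞ (iterDirDeriv l f) := by
  induction l with
  | nil => exact hf
  | cons v l ih => exact contDiff_dirDeriv ih v

theorem tsupport_iterDirDeriv_subset (f : E → V) (l : List E) :
    tsupport (iterDirDeriv l f) ⊆ tsupport f := by
  induction l with
  | nil => exact subset_rfl
  | cons v l ih => exact (tsupport_dirDeriv_subset _ v).trans ih

theorem iterDirDeriv_clm_comp (L : V →L[ℝ] W) (hf : ContDiff ℝ ∞ f) (l : List E) :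
    iterDirDeriv l (fun x => L (f x)) = fun x => L (iterDirDeriv l f x) := by
  induction l with
  | nil => rfl
  | cons v l ih =>
    exact (congrArg (dirDeriv v) ih).trans (dirDeriv_clm_comp L (contDiff_iterDirDeriv hf l) v)

theorem fderiv_iterDirDeriv (hf : ContDiff ℝ ∞ f) (l : List E) :
    fderiv ℝ (iterDirDeriv l f) = iterDirDeriv l (fderiv ℝ f) := by
  induction l with
  | nil => rfl
  | cons v l ih =>
    exact (fderiv_dirDeriv (contDiff_iterDirDeriv hf l) v).trans (congrArg (dirDeriv v) ih)

theorem iterDirDeriv_eqOn {g : E → V} (hs : IsOpen s) (h : Set.EqOn f g s) (l : List E) :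
    Set.EqOn (iterDirDeriv l f) (iterDirDeriv l g) s := by
  induction l with
  | nil => exact h
  | cons v l ih => exact dirDeriv_eqOn hs ih v

theorem dirDeriv_add {g : E → V} (hf : ContDiff ℝ ∞ f) (hg : ContDiff ℝ ∞ g) (v : E) :
    dirDeriv v (fun x => f x + g x) = fun x => dirDeriv v f x + dirDeriv v g x := by
  ext x
  simp [dirDeriv, fderiv_fun_add (hf.differentiable (by simp) x) (hg.differentiable (by simp) x)]

theorem iterDirDeriv_add {g : E → V} (hf : ContDiff ℝ ∞ f) (hg : ContDiff ℝ ∞ g) (l : List E) :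
    iterDirDeriv l (fun x => f x + g x) = fun x => iterDirDeriv l f x + iterDirDeriv l g x := by
  induction l with
  | nil => rfl
  | cons v l ih =>
    exact (congrArg (dirDeriv v) ih).trans
      (dirDeriv_add (contDiff_iterDirDeriv hf l) (contDiff_iterDirDeriv hg l) v)

/-- The operator `∑ q, ∂^{l q} G_q` in divergence form applied to a finite family `G` of fluxes. -/
def divForm [Fintype ι] (l : ι → List E) (G : ι → E → V) : E → V :=
  fun x => ∑ q, iterDirDeriv (l q) (G q) x

variable [Fintype ι] {G : ι → E → V}

theorem divForm_clm_comp (L : V →L[ℝ] W) (hG : ∀ q, ContDiff ℝ ∞ (G q)) (l : ι → List E) :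
    divForm l (fun q x => L (G q x)) = fun x => L (divForm l G x) := by
  ext x
  simp only [divForm, iterDirDeriv_clm_comp L (hG _), map_sum]

theorem iterDirDeriv_divForm (hG : ∀ q, ContDiff ℝ ∞ (G q)) (l : ι → List E)
    (l' : List E) : iterDirDeriv l' (divForm l G) = divForm (fun q => l' ++ l q) G := by
  induction l' with
  | nil => rfl
  | cons v l' ih =>
    refine (congrArg (dirDeriv v) ih).trans ?_
    exact dirDeriv_sum (fun q => contDiff_iterDirDeriv (hG q) _) v

theorem divForm_divForm {κ : Type*} [Fintype κ] (hG : ∀ q, ContDiff ℝ ∞ (G q))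
    (l : ι → List E) (l' : κ → List E) (A : κ → V →L[ℝ] W) :
    divForm l' (fun q x => A q (divForm l G x)) =
      divForm (fun q : κ × ι => l' q.1 ++ l q.2) fun q x => A q.1 (G q.2 x) := by
  ext x
  simp only [divForm, Fintype.sum_prod_type]
  refine Finset.sum_congr rfl fun q _ => ?_
  have hAG i : ContDiff ℝ ∞ fun x => A q (G i x) := (A q).contDiff.comp (hG i)
  have := congrFun (iterDirDeriv_divForm hAG l (l' q)) x
  rwa [divForm_clm_comp (A q) hG] at this

theorem contDiff_divForm (hG : ∀ q, ContDiff ℝ ∞ (G q)) (l : ι → List E) :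
    ContDiff ℝ ∞ (divForm l G) :=
  ContDiff.sum fun q _ => contDiff_iterDirDeriv (hG q) _

theorem divForm_add {H : ι → E → V} (hG : ∀ q, ContDiff ℝ ∞ (G q)) (hH : ∀ q, ContDiff ℝ ∞ (H q))
    (l : ι → List E) :
    divForm l (fun q x => G q x + H q x) = fun x => divForm l G x + divForm l H x := by
  ext x
  simp only [divForm, iterDirDeriv_add (hG _) (hH _), Finset.sum_add_distrib]

theorem divForm_eqOn {H : ι → E → V} (hs : IsOpen s) (h : ∀ q, Set.EqOn (G q) (H q) s)
    (l : ι → List E) : Set.EqOn (divForm l G) (divForm l H) s := fun _ hx =>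
  Finset.sum_congr rfl fun q _ => iterDirDeriv_eqOn hs (h q) (l q) hx

theorem fderiv_divForm (hG : ∀ q, ContDiff ℝ ∞ (G q)) (l : ι → List E) :
    fderiv ℝ (divForm l G) = divForm l fun q => fderiv ℝ (G q) := by
  ext1 x
  simp only [divForm, ← fderiv_iterDirDeriv (hG _)]
  exact fderiv_fun_sum fun q _ => (contDiff_iterDirDeriv (hG q) _).differentiable (by simp) x

end DirDeriv

section Laplacian

variable {ι E V W : Type*} [NormedAddCommGroup E] [InnerProductSpace ℝ E] [FiniteDimensional ℝ E]
  [NormedAddCommGroup V] [NormedSpace ℝ V] [NormedAddCommGroup W] [NormedSpace ℝ W]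
  {f : E → V}

theorem laplacian_eq_sum_dirDeriv [Fintype ι] (b : OrthonormalBasis ι ℝ E) (hf : ContDiff ℝ ∞ f) :
    Δ f = fun x => ∑ i, dirDeriv (b i) (dirDeriv (b i) f) x := by
  ext x
  rw [InnerProductSpace.laplacian_eq_iteratedFDeriv_orthonormalBasis f b]
  refine Finset.sum_congr rfl fun i _ => ?_
  rw [iteratedFDeriv_two_apply, dirDeriv, fderiv_dirDeriv hf]
  rfl

theorem contDiff_laplacian (hf : ContDiff ℝ ∞ f) : ContDiff ℝ ∞ (Δ f) := by
  rw [laplacian_eq_sum_dirDeriv (stdOrthonormalBasis ℝ E) hf]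
  exact ContDiff.sum fun i _ => contDiff_dirDeriv (contDiff_dirDeriv hf _) _

theorem laplacian_eqOn {g : E → V} {s : Set E} (hs : IsOpen s) (h : Set.EqOn f g s) :
    Set.EqOn (Δ f) (Δ g) s := fun _ hx =>
  (InnerProductSpace.laplacian_congr_nhds (h.eventuallyEq_of_mem (hs.mem_nhds hx))).eq_of_nhds

theorem laplacian_clm_comp (L : V →L[ℝ] W) (hf : ContDiff ℝ ∞ f) :
    Δ (fun x => L (f x)) = fun x => L (Δ f x) :=
  funext fun _ => (hf.of_le ENat.LEInfty.out).contDiffAt.laplacian_CLM_comp_left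

theorem tsupport_laplacian_subset (f : E → V) : tsupport (Δ f) ⊆ tsupport f := by
  refine closure_minimal (fun x hx => ?_) (isClosed_tsupport f)
  by_contra h
  rw [notMem_tsupport_iff_eventuallyEq] at h
  refine hx ?_
  rw [InnerProductSpace.laplacian_congr_nhds h |>.eq_of_nhds]
  exact congrFun InnerProductSpace.laplacian_const x

theorem fderiv_laplacian (hf : ContDiff ℝ ∞ f) : fderiv ℝ (Δ f) = Δ (fderiv ℝ f) := by
  have b := stdOrthonormalBasis ℝ E
  have hf' := contDiff_fderiv hf
  ext1 x
  rw [laplacian_eq_sum_dirDeriv b hf, laplacian_eq_sum_dirDeriv b hf', fderiv_fun_sum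
    fun i _ => (contDiff_dirDeriv (contDiff_dirDeriv hf _) _).differentiable (by simp) x]
  refine Finset.sum_congr rfl fun i _ => ?_
  rw [fderiv_dirDeriv (contDiff_dirDeriv hf _), fderiv_dirDeriv hf]

end Laplacian

section Average

section Support

variable {E : Type*} [NormedAddCommGroup E] {κ : E → ℝ}

theorem sub_smul_mem_closedBall [NormedSpace ℝ E] (hs : tsupport κ ⊆ closedBall 0 1) {t : ℝ}
    (ht : 0 ≤ t) (x : E) {z : E} (hz : κ z ≠ 0) : x - t • z ∈ closedBall x t := by
  have : ‖z‖ ≤ 1 := mem_closedBall_zero_iff.1 (hs (subset_tsupport κ hz))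
  rw [mem_closedBall_iff_norm, sub_sub_cancel_left, norm_neg, norm_smul, norm_of_nonneg ht]
  exact mul_le_of_le_one_right ht this

theorem hasCompactSupport_of_tsupport_subset_closedBall [ProperSpace E]
    (hs : tsupport κ ⊆ closedBall 0 1) :
    HasCompactSupport κ :=
  (isCompact_closedBall 0 1).of_isClosed_subset (isClosed_tsupport κ) hs

end Support

variable {ι E V : Type*} [NormedAddCommGroup E] [InnerProductSpace ℝ E]
  [MeasurableSpace E] [BorelSpace E] [FiniteDimensional ℝ E]
  [NormedAddCommGroup V] [NormedSpace ℝ V] {κ : E → ℝ} {f : E → V} {t B : ℝ} {x : E}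

/-- The average of `f` at `x` at scale `t` with weight `κ`, that is, the convolution of `f` with
`t⁻ᵈ κ(·/t)`, written so that it makes sense for every real `t`, including `t = 0`. -/
def avg (κ : E → ℝ) (f : E → V) (t : ℝ) (x : E) : V := ∫ z, κ z • f (x - t • z)

theorem integrable_smul_comp_sub_smul (hκ : Continuous κ) (hc : HasCompactSupport κ)
    (hf : Continuous f) (t : ℝ) (x : E) : Integrable fun z => κ z • f (x - t • z) :=
  (hκ.smul (hf.comp (by fun_prop))).integrable_of_hasCompactSupport hc.smul_right

theorem avg_zero_right [CompleteSpace V] (hκ : ∫ z, κ z = 1) (f : E → V) (x : E) :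
    avg κ f 0 x = f x := by
  simp [avg, integral_smul_const, hκ]

theorem avg_sum_right [Fintype ι] {f : ι → E → V} (hκ : Continuous κ) (hc : HasCompactSupport κ)
    (hf : ∀ i, Continuous (f i)) (t : ℝ) (x : E) :
    avg κ (fun y => ∑ i, f i y) t x = ∑ i, avg κ (f i) t x := by
  simp only [avg, Finset.smul_sum]
  exact integral_finsetSum _ fun i _ => integrable_smul_comp_sub_smul hκ hc (hf i) t x

theorem avg_sum_left [Fintype ι] {κ : ι → E → ℝ} (hκ : ∀ i, Continuous (κ i))
    (hc : ∀ i, HasCompactSupport (κ i)) (hf : Continuous f) (t : ℝ) (x : E) :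
    avg (fun z => ∑ i, κ i z) f t x = ∑ i, avg (κ i) f t x := by
  simp only [avg, Finset.sum_smul]
  exact integral_finsetSum _ fun i _ => integrable_smul_comp_sub_smul (hκ i) (hc i) hf t x

theorem avg_congr {g : E → V} (hs : tsupport κ ⊆ closedBall 0 1) (ht : 0 ≤ t)
    (h : Set.EqOn f g (closedBall x t)) : avg κ f t x = avg κ g t x := by
  refine integral_congr_ae (Eventually.of_forall fun z => ?_)
  by_cases hz : κ z = 0
  · simp [hz]
  · simp only [h (sub_smul_mem_closedBall hs ht x hz)]

theorem norm_avg_le (hκ : Continuous κ) (hs : tsupport κ ⊆ closedBall 0 1) (ht : 0 ≤ t)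
    (hB : ∀ y ∈ closedBall x t, ‖f y‖ ≤ B) : ‖avg κ f t x‖ ≤ (∫ z, ‖κ z‖) * B := by
  have hc := hasCompactSupport_of_tsupport_subset_closedBall hs
  rw [avg, ← integral_mul_const]
  refine norm_integral_le_of_norm_le
    ((hκ.integrable_of_hasCompactSupport hc).norm.mul_const B) (Eventually.of_forall fun z => ?_)
  rw [norm_smul]
  by_cases hz : κ z = 0
  · simp [hz]
  · exact mul_le_mul_of_nonneg_left (hB _ (sub_smul_mem_closedBall hs ht x hz)) (norm_nonneg _)

theorem smul_avg_dirDeriv (hκ : ContDiff ℝ ∞ κ) (hc : HasCompactSupport κ) (hf : ContDiff ℝ ∞ f)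
    (v : E) (t : ℝ) (x : E) : t • avg κ (dirDeriv v f) t x = avg (dirDeriv v κ) f t x := by
  set g : E → V := fun z => f (x - t • z)
  have hg : ContDiff ℝ ∞ g := hf.comp (by fun_prop)
  have hκ' := contDiff_dirDeriv hκ v
  have hg' (z : E) : fderiv ℝ g z v = -t • dirDeriv v f (x - t • z) := by
    have hl : HasFDerivAt (fun z : E => x - t • z) (-(t • ContinuousLinearMap.id ℝ E)) z :=
      ((hasFDerivAt_id z).const_smul t).const_sub x
    have hfd := (hf.differentiable (by simp) (x - t • z)).hasFDerivAt
    simpa [dirDeriv, Function.comp_def] using congrArg (· v) (hfd.comp z hl).fderiv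
  have ibp : ∫ z, κ z • fderiv ℝ g z v = -∫ z, dirDeriv v κ z • g z :=
    integral_smul_fderiv_eq_neg_fderiv_smul_of_integrable
      ((hκ'.continuous.smul hg.continuous).integrable_of_hasCompactSupport
        (hc.fderiv_apply ℝ v).smul_right)
      ((hκ.continuous.smul (contDiff_dirDeriv hg v).continuous).integrable_of_hasCompactSupport
        hc.smul_right)
      ((hκ.continuous.smul hg.continuous).integrable_of_hasCompactSupport hc.smul_right)
      (fun z _ => hκ.differentiable (by simp) z) (fun z _ => hg.differentiable (by simp) z)
  rw [avg, avg, ← neg_inj, ← ibp, ← integral_smul, ← integral_neg]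
  simp only [hg', smul_neg, neg_smul, smul_comm t]

theorem smul_avg_iterDirDeriv (hκ : ContDiff ℝ ∞ κ) (hc : HasCompactSupport κ)
    (hf : ContDiff ℝ ∞ f) (l : List E) (t : ℝ) (x : E) :
    t ^ l.length • avg κ (iterDirDeriv l f) t x = avg (iterDirDeriv l.reverse κ) f t x := by
  induction l generalizing κ with
  | nil => simp [iterDirDeriv]
  | cons v l ih =>
    have := ih (contDiff_dirDeriv hκ v) (hc.fderiv_apply ℝ v)
    rw [← smul_avg_dirDeriv hκ hc (contDiff_iterDirDeriv hf l), smul_smul, ← pow_succ] at this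
    simpa [iterDirDeriv] using this

theorem avg_laplacian (hκ : ContDiff ℝ ∞ κ) (hc : HasCompactSupport κ) (hf : ContDiff ℝ ∞ f)
    (t : ℝ) (x : E) : avg (Δ κ) f t x = t ^ 2 • avg κ (Δ f) t x := by
  let b := stdOrthonormalBasis ℝ E
  have hκ' i := contDiff_dirDeriv hκ (b i)
  have hf' i := contDiff_dirDeriv hf (b i)
  have hc' i : HasCompactSupport (dirDeriv (b i) κ) := hc.fderiv_apply ℝ (b i)
  rw [laplacian_eq_sum_dirDeriv b hκ, laplacian_eq_sum_dirDeriv b hf,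
    avg_sum_left (fun i => (contDiff_dirDeriv (hκ' i) _).continuous)
      (fun i => (hc' i).fderiv_apply ℝ (b i)) hf.continuous,
    avg_sum_right hκ.continuous hc fun i => (contDiff_dirDeriv (hf' i) _).continuous,
    Finset.smul_sum]
  refine Finset.sum_congr rfl fun i _ => ?_
  rw [← smul_avg_dirDeriv (hκ' i) (hc' i) hf, ← smul_avg_dirDeriv hκ hc (hf' i), smul_smul, sq]

theorem norm_avg_fderiv_le [CompleteSpace V] (hκ : ContDiff ℝ ∞ κ)
    (hs : tsupport κ ⊆ closedBall 0 1) (hf : ContDiff ℝ ∞ f) (ht : 0 < t)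
    (hfB : ∀ y ∈ closedBall x t, ‖f y‖ ≤ B) :
    ‖avg κ (fderiv ℝ f) t x‖ ≤ (∫ z, ‖fderiv ℝ κ z‖) * (B / t) := by
  have hc := hasCompactSupport_of_tsupport_subset_closedBall hs
  have hB : 0 ≤ B := (norm_nonneg _).trans (hfB x (mem_closedBall_self ht.le))
  refine ContinuousLinearMap.opNorm_le_bound _ (by positivity) fun v => ?_
  have happly : avg κ (fderiv ℝ f) t x v = t⁻¹ • avg (dirDeriv v κ) f t x := by
    rw [← smul_avg_dirDeriv hκ hc hf, inv_smul_smul₀ ht.ne', avg, ContinuousLinearMap.integral_apply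
      (integrable_smul_comp_sub_smul hκ.continuous hc (contDiff_fderiv hf).continuous t x)]
    rfl
  have hint : ∫ z, ‖dirDeriv v κ z‖ ≤ (∫ z, ‖fderiv ℝ κ z‖) * ‖v‖ := by
    rw [← integral_mul_const]
    refine integral_mono_of_nonneg (Eventually.of_forall fun z => norm_nonneg _) ?_
      (Eventually.of_forall fun z => (fderiv ℝ κ z).le_opNorm v)
    exact (((contDiff_fderiv hκ).continuous.integrable_of_hasCompactSupport
      (hc.fderiv ℝ)).norm.mul_const _)
  calc ‖avg κ (fderiv ℝ f) t x v‖ = t⁻¹ * ‖avg (dirDeriv v κ) f t x‖ := by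
        rw [happly, norm_smul, norm_of_nonneg (by positivity)]
    _ ≤ t⁻¹ * ((∫ z, ‖fderiv ℝ κ z‖) * ‖v‖ * B) := by
        have := norm_avg_le (contDiff_dirDeriv hκ v).continuous
          ((tsupport_dirDeriv_subset κ v).trans hs) ht.le hfB
        gcongr
        exact this.trans (by gcongr)
    _ = (∫ z, ‖fderiv ℝ κ z‖) * (B / t) * ‖v‖ := by ring

theorem hasDerivAt_integral_smul (hκ : Continuous κ) (hc : HasCompactSupport κ)
    {G G' : ℝ → E → V} (hG : ∀ t, Continuous (G t)) (hG' : Continuous (Function.uncurry G'))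
    (hd : ∀ t z, HasDerivAt (G · z) (G' t z) t) (t : ℝ) :
    HasDerivAt (fun t => ∫ z, κ z • G t z) (∫ z, κ z • G' t z) t := by
  obtain ⟨C, hC⟩ := ((isCompact_closedBall t 1).prod hc).exists_bound_of_continuousOn
    hG'.continuousOn
  have hκG' : Continuous fun z => κ z • G' t z :=
    hκ.smul (hG'.comp (f := fun z => (t, z)) (by fun_prop))
  refine (hasDerivAt_integral_of_dominated_loc_of_deriv_le (bound := fun z => ‖κ z‖ * C)
    (closedBall_mem_nhds t one_pos)
    (Eventually.of_forall fun t => (hκ.smul (hG t)).aestronglyMeasurable)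
    ((hκ.smul (hG t)).integrable_of_hasCompactSupport hc.smul_right)
    hκG'.aestronglyMeasurable (Eventually.of_forall fun z τ hτ => ?_)
    ((hκ.integrable_of_hasCompactSupport hc).norm.mul_const C)
    (Eventually.of_forall fun z τ _ => (hd τ z).const_smul (κ z))).2
  rw [norm_smul]
  by_cases hz : z ∈ tsupport κ
  · exact mul_le_mul_of_nonneg_left (hC (τ, z) ⟨hτ, hz⟩) (norm_nonneg _)
  · simp [image_eq_zero_of_notMem_tsupport hz]

theorem hasDerivAt_avg [Fintype ι] (b : OrthonormalBasis ι ℝ E) (hκ : Continuous κ)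
    (hc : HasCompactSupport κ) (hf : ContDiff ℝ ∞ f) (t : ℝ) (x : E) :
    HasDerivAt (avg κ f · x)
      (∑ i, avg (fun z => -(inner ℝ z (b i) * κ z)) (dirDeriv (b i) f) t x) t := by
  have hf' := (contDiff_fderiv hf).continuous
  have hd (τ : ℝ) (z : E) :
      HasDerivAt (fun τ => f (x - τ • z)) (fderiv ℝ f (x - τ • z) (-z)) τ := by
    have hl : HasDerivAt (fun τ : ℝ => x - τ • z) (-z) τ := by
      simpa using ((hasDerivAt_id τ).smul_const z).const_sub x
    exact (hf.differentiable (by simp) _).hasFDerivAt.comp_hasDerivAt τ hl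
  refine (hasDerivAt_integral_smul hκ hc
    (fun τ => hf.continuous.comp (by fun_prop : Continuous fun z => x - τ • z))
    (by simp only [Function.uncurry_def]; fun_prop) hd t).congr_deriv ?_
  have hi (i : ι) : Integrable fun z =>
      -(inner ℝ z (b i) * κ z) • dirDeriv (b i) f (x - t • z) :=
    integrable_smul_comp_sub_smul (by fun_prop) hc.mul_left.neg
      (contDiff_dirDeriv hf (b i)).continuous t x
  simp only [avg]
  rw [← integral_finsetSum _ fun i _ => hi i]
  congr with z
  nth_rw 3 [← b.sum_repr' z]
  simp [dirDeriv, Finset.smul_sum, smul_smul, real_inner_comm, mul_comm]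

theorem hasDerivAt_avg_of_dirDeriv_eq {φ η : E → ℝ} (hφ : Continuous φ)
    (hφc : HasCompactSupport φ) (hη : ContDiff ℝ ∞ η) (hηc : HasCompactSupport η)
    (h : ∀ v z, dirDeriv v η z = -(inner ℝ z v * φ z)) (hf : ContDiff ℝ ∞ f) (t : ℝ) (x : E) :
    HasDerivAt (avg φ f · x) (t • avg η (Δ f) t x) t := by
  let b := stdOrthonormalBasis ℝ E
  refine (hasDerivAt_avg b hφ hφc hf t x).congr_deriv ?_
  simp only [← h]
  have hf' i := contDiff_dirDeriv hf (b i)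
  rw [laplacian_eq_sum_dirDeriv b hf, avg_sum_right hη.continuous hηc
    fun i => (contDiff_dirDeriv (hf' i) _).continuous, Finset.smul_sum]
  exact Finset.sum_congr rfl fun i _ => (smul_avg_dirDeriv hη hηc (hf' i) (b i) t x).symm

/-- A normalised averaging kernel `φ` with a potential `ψ`, in the sense that `∇Δψ(z) = -φ(z) z`;
this relation turns the scale derivative of `avg φ` into an average of the bilaplacian. -/
structure IsAveragingKernel (ψ φ : E → ℝ) : Prop where
  contDiff_potential : ContDiff ℝ ∞ ψ
  contDiff : ContDiff ℝ ∞ φ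
  tsupport_potential_subset : tsupport ψ ⊆ closedBall 0 1
  tsupport_subset : tsupport φ ⊆ closedBall 0 1
  dirDeriv_laplacian : ∀ v z, dirDeriv v (Δ ψ) z = -(inner ℝ z v * φ z)
  integral_eq_one : ∫ z, φ z = 1

theorem IsAveragingKernel.hasDerivAt_avg {ψ φ : E → ℝ} (h : IsAveragingKernel ψ φ)
    (hf : ContDiff ℝ ∞ f) (t : ℝ) (x : E) :
    HasDerivAt (avg φ f · x) (t ^ 3 • avg ψ (Δ (Δ f)) t x) t := by
  have hψ := h.contDiff_potential
  have hψc := hasCompactSupport_of_tsupport_subset_closedBall h.tsupport_potential_subset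
  have hφc := hasCompactSupport_of_tsupport_subset_closedBall h.tsupport_subset
  have hΔψc := hψc.mono' ((subset_tsupport _).trans (tsupport_laplacian_subset ψ))
  convert hasDerivAt_avg_of_dirDeriv_eq h.contDiff.continuous hφc (contDiff_laplacian hψ) hΔψc
    h.dirDeriv_laplacian hf t x using 1
  rw [avg_laplacian hψ hψc (contDiff_laplacian hf), smul_smul, ← pow_succ']

end Average

section Kernel

theorem contDiff_deriv {g : ℝ → ℝ} (hg : ContDiff ℝ ∞ g) : ContDiff ℝ ∞ (deriv g) :=
  (contDiff_infty_iff_deriv.1 hg).2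

theorem deriv_deriv_expNegInvGlue (x : ℝ) :
    deriv (deriv expNegInvGlue) x = x⁻¹ ^ 3 * (x⁻¹ - 2) * expNegInvGlue x := by
  have h1 : deriv expNegInvGlue = fun x => (Polynomial.X ^ 2).eval x⁻¹ * expNegInvGlue x := by
    ext x
    simpa using (expNegInvGlue.hasDerivAt_polynomial_eval_inv_mul 1 x).deriv
  rw [h1, (expNegInvGlue.hasDerivAt_polynomial_eval_inv_mul _ x).deriv]
  simp only [Polynomial.derivative_X_pow, Polynomial.eval_mul, Polynomial.eval_sub,
    Polynomial.eval_pow, Polynomial.eval_X, Polynomial.eval_C]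
  ring

-- `exp (-1 / x)` is convex for `x ≤ 1 / 2`, and `(1 - s) / 3 < 1 / 2` for `s ≥ 0`.
theorem exists_contDiff_deriv_deriv_nonneg : ∃ g : ℝ → ℝ, ContDiff ℝ ∞ g ∧
    tsupport g ⊆ Set.Iic 1 ∧ (∀ s, 0 ≤ s → 0 ≤ deriv (deriv g) s) ∧ deriv (deriv g) 0 ≠ 0 := by
  let g : ℝ → ℝ := fun s => expNegInvGlue ((1 - s) / 3)
  have hg : ContDiff ℝ ∞ g := expNegInvGlue.contDiff.comp (by fun_prop)
  have hl (s : ℝ) : HasDerivAt (fun s : ℝ => (1 - s) / 3) (-1 / 3) s :=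
    ((hasDerivAt_id s).const_sub 1).div_const 3
  have hE : ContDiff ℝ ∞ expNegInvGlue := expNegInvGlue.contDiff
  have h1 : deriv g = fun s => deriv expNegInvGlue ((1 - s) / 3) * (-1 / 3) := funext fun s =>
    ((hE.differentiable (by simp) _).hasDerivAt.comp s (hl s)).deriv
  have h2 (s : ℝ) : deriv (deriv g) s = deriv (deriv expNegInvGlue) ((1 - s) / 3) * (1 / 9) := by
    have h := (((contDiff_deriv hE).differentiable (by simp) _).hasDerivAt.comp s (hl s)).mul_const
      (-1 / 3)
    rw [h1]
    exact h.deriv.trans (by ring)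
  refine ⟨g, hg, closure_minimal (fun s hs => ?_) isClosed_Iic, fun s hs => ?_, ?_⟩
  · contrapose! hs
    simp only [Set.mem_Iic, not_le] at hs
    exact Function.notMem_support.2 (expNegInvGlue.zero_of_nonpos (by linarith))
  · rw [h2, deriv_deriv_expNegInvGlue]
    rcases le_or_gt 1 s with h | h
    · simp [expNegInvGlue.zero_of_nonpos (by linarith : (1 - s) / 3 ≤ 0)]
    · have hx : 0 < (1 - s) / 3 := by linarith
      have : 2 ≤ ((1 - s) / 3)⁻¹ := (le_inv_comm₀ two_pos hx).2 (by linarith)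
      have := expNegInvGlue.nonneg ((1 - s) / 3)
      have : 0 ≤ ((1 - s) / 3)⁻¹ - 2 := by linarith
      positivity
  · rw [h2, deriv_deriv_expNegInvGlue]
    norm_num

variable {E : Type*} [NormedAddCommGroup E] {g : ℝ → ℝ}

theorem tsupport_comp_norm_sq_subset (hs : tsupport g ⊆ Set.Iic 1) :
    tsupport (fun z : E => g (‖z‖ ^ 2)) ⊆ closedBall 0 1 := by
  refine closure_minimal (fun z hz => ?_) isClosed_closedBall
  have : ‖z‖ ^ 2 ≤ 1 := hs (subset_tsupport g hz)
  simpa [sq_le_one_iff₀] using this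

variable [InnerProductSpace ℝ E]

theorem dirDeriv_comp_norm_sq (hg : ContDiff ℝ ∞ g) (v : E) :
    dirDeriv v (fun z => g (‖z‖ ^ 2)) = fun z => (2 * inner ℝ z v) • deriv g (‖z‖ ^ 2) := by
  ext z
  have h := (hg.differentiable (by simp) _).hasDerivAt.comp_hasFDerivAt z
    (hasStrictFDerivAt_norm_sq z).hasFDerivAt
  simpa [dirDeriv, Function.comp_def, mul_comm, mul_left_comm] using congrArg (· v) h.fderiv

theorem contDiff_comp_norm_sq (hg : ContDiff ℝ ∞ g) : ContDiff ℝ ∞ fun z : E => g (‖z‖ ^ 2) :=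
  hg.comp (contDiff_norm_sq ℝ)

variable [FiniteDimensional ℝ E]

theorem laplacian_comp_norm_sq (hg : ContDiff ℝ ∞ g) (z : E) :
    Δ (fun z : E => g (‖z‖ ^ 2)) z = 2 * Module.finrank ℝ E * deriv g (‖z‖ ^ 2) +
      4 * ‖z‖ ^ 2 * deriv (deriv g) (‖z‖ ^ 2) := by
  let b := stdOrthonormalBasis ℝ E
  have hl (v : E) : ContDiff ℝ ∞ fun z : E => 2 * inner ℝ z v :=
    contDiff_const.mul (contDiff_id.inner ℝ contDiff_const)
  have hl' (v : E) : dirDeriv v (fun z : E => 2 * inner ℝ z v) = fun _ => 2 * ‖v‖ ^ 2 := by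
    ext z
    have h := ((hasFDerivAt_id z).inner ℝ (hasFDerivAt_const v z)).const_mul 2
    simpa [dirDeriv] using congrArg (· v) h.fderiv
  have hg' := contDiff_comp_norm_sq (E := E) (contDiff_deriv hg)
  rw [laplacian_eq_sum_dirDeriv b (contDiff_comp_norm_sq hg)]
  simp only [dirDeriv_comp_norm_sq hg, dirDeriv_smul (hl _) hg', hl',
    dirDeriv_comp_norm_sq (contDiff_deriv hg), OrthonormalBasis.norm_eq_one]
  have hsum (c : ℝ) : ∑ i, 2 * inner ℝ z (b i) * (2 * inner ℝ z (b i) * c) = 4 * ‖z‖ ^ 2 * c := by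
    have hb : ∑ i, inner ℝ z (b i) ^ 2 = ‖z‖ ^ 2 := by
      simpa [sq_abs] using b.sum_sq_norm_inner_left z
    rw [← hb, Finset.mul_sum, Finset.sum_mul]
    exact Finset.sum_congr rfl fun i _ => by ring
  simp only [smul_eq_mul, Finset.sum_add_distrib, hsum, one_pow, mul_one, Finset.sum_const,
    Finset.card_univ, Fintype.card_fin, nsmul_eq_mul]
  ring

theorem dirDeriv_laplacian_comp_norm_sq (hg : ContDiff ℝ ∞ g) (v z : E) :
    dirDeriv v (Δ fun z : E => g (‖z‖ ^ 2)) z = 2 * inner ℝ z v *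
      (Δ (fun z : E => deriv g (‖z‖ ^ 2)) z + 4 * deriv (deriv g) (‖z‖ ^ 2)) := by
  let a : ℝ → ℝ := fun s => 2 * Module.finrank ℝ E * deriv g s + 4 * s * deriv (deriv g) s
  have hg' := contDiff_deriv hg
  have hg'' := contDiff_deriv hg'
  have ha : ContDiff ℝ ∞ a := by fun_prop
  have hda (s : ℝ) : deriv a s = 2 * Module.finrank ℝ E * deriv (deriv g) s +
      (4 * deriv (deriv g) s + 4 * s * deriv (deriv (deriv g)) s) := by
    have h1 := ((hg'.differentiable (by simp) s).hasDerivAt.const_mul (2 * Module.finrank ℝ E : ℝ))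
    have h2 := ((hasDerivAt_id s).const_mul 4).mul (hg''.differentiable (by simp) s).hasDerivAt
    simpa using (h1.fun_add h2).deriv
  rw [funext (laplacian_comp_norm_sq hg), dirDeriv_comp_norm_sq ha, laplacian_comp_norm_sq hg']
  simp only [hda, smul_eq_mul]
  ring

variable [MeasurableSpace E] [BorelSpace E]

theorem integral_laplacian_eq_zero {κ : E → ℝ} (hκ : ContDiff ℝ ∞ κ) (hc : HasCompactSupport κ) :
    ∫ z, Δ κ z = 0 := by
  simpa [avg] using avg_laplacian hκ hc (contDiff_const (c := (1 : ℝ))) 0 0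

theorem exists_contDiff_integral_deriv_deriv_comp_norm_sq (c : ℝ) : ∃ g : ℝ → ℝ,
    ContDiff ℝ ∞ g ∧ tsupport g ⊆ Set.Iic 1 ∧ ∫ z : E, deriv (deriv g) (‖z‖ ^ 2) = c := by
  obtain ⟨g, hg, hgs, hnonneg, hzero⟩ := exists_contDiff_deriv_deriv_nonneg
  have hg'' := contDiff_comp_norm_sq (E := E) (contDiff_deriv (contDiff_deriv hg))
  have hc : HasCompactSupport fun z : E => deriv (deriv g) (‖z‖ ^ 2) :=
    hasCompactSupport_of_tsupport_subset_closedBall <| tsupport_comp_norm_sq_subset <|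
      tsupport_deriv_subset.trans (tsupport_deriv_subset.trans hgs)
  have hpos : 0 < ∫ z : E, deriv (deriv g) (‖z‖ ^ 2) :=
    hg''.continuous.integral_pos_of_hasCompactSupport_nonneg_nonzero hc
      (fun z => hnonneg _ (by positivity)) (x := 0) (by simpa using hzero)
  set m := ∫ z : E, deriv (deriv g) (‖z‖ ^ 2)
  refine ⟨fun s => c / m * g s, by fun_prop, tsupport_mul_subset_right.trans hgs, ?_⟩
  simp only [deriv_const_mul_field', integral_const_mul]
  exact div_mul_cancel₀ c hpos.ne'

theorem exists_isAveragingKernel : ∃ ψ φ : E → ℝ, IsAveragingKernel ψ φ := by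
  obtain ⟨g, hg, hgs, hint⟩ :=
    exists_contDiff_integral_deriv_deriv_comp_norm_sq (E := E) (-(1 / 8))
  have hg's := tsupport_deriv_subset.trans hgs
  have hψ' := contDiff_comp_norm_sq (E := E) (contDiff_deriv hg)
  have hψ's := tsupport_comp_norm_sq_subset (E := E) hg's
  have hψ'' := contDiff_comp_norm_sq (E := E) (contDiff_deriv (contDiff_deriv hg))
  have hψ''s := tsupport_comp_norm_sq_subset (E := E) (tsupport_deriv_subset.trans hg's)
  have hΔs := (tsupport_laplacian_subset _).trans hψ's
  refine ⟨fun z => g (‖z‖ ^ 2), fun z => -2 *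
    (Δ (fun z : E => deriv g (‖z‖ ^ 2)) z + 4 * deriv (deriv g) (‖z‖ ^ 2)),
    ⟨contDiff_comp_norm_sq hg,
    contDiff_const.mul ((contDiff_laplacian hψ').add (contDiff_const.mul hψ'')),
    tsupport_comp_norm_sq_subset hgs, ?_, fun v z => ?_, ?_⟩⟩
  · exact tsupport_mul_subset_right.trans ((tsupport_add _ _).trans
      (Set.union_subset hΔs (tsupport_mul_subset_right.trans hψ''s)))
  · rw [dirDeriv_laplacian_comp_norm_sq hg]
    ring
  · have hc := hasCompactSupport_of_tsupport_subset_closedBall hψ's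
    have hi₁ : Integrable (Δ fun z : E => deriv g (‖z‖ ^ 2)) :=
      (contDiff_laplacian hψ').continuous.integrable_of_hasCompactSupport
        (hasCompactSupport_of_tsupport_subset_closedBall hΔs)
    have hi₂ : Integrable fun z : E => 4 * deriv (deriv g) (‖z‖ ^ 2) :=
      (hψ''.continuous.integrable_of_hasCompactSupport
        (hasCompactSupport_of_tsupport_subset_closedBall hψ''s)).const_mul 4
    rw [integral_const_mul, integral_add hi₁ hi₂, integral_laplacian_eq_zero hψ' hc,
      integral_const_mul, hint]
    norm_num

end Kernel

section Interior

variable {ι E V W : Type*} [Fintype ι] [NormedAddCommGroup E] [InnerProductSpace ℝ E]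
  [FiniteDimensional ℝ E] [NormedAddCommGroup V] [NormedSpace ℝ V]
  [NormedAddCommGroup W] [NormedSpace ℝ W]
  {f : E → V} {l : ι → List E} {G : ι → E → V} {s : Set E}

theorem bilaplacian_fderiv_eqOn (hs : IsOpen s) (hf : ContDiff ℝ ∞ f)
    (hG : ∀ q, ContDiff ℝ ∞ (G q)) (h : Set.EqOn (Δ (Δ f)) (divForm l G) s) :
    Set.EqOn (Δ (Δ (fderiv ℝ f))) (divForm l fun q => fderiv ℝ (G q)) s := by
  rw [← fderiv_laplacian hf, ← fderiv_laplacian (contDiff_laplacian hf), ← fderiv_divForm hG]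
  exact fun x hx => (h.eventuallyEq_of_mem (hs.mem_nhds hx)).fderiv_eq

theorem bilaplacian_clm_comp_eqOn (L : V →L[ℝ] W) (hf : ContDiff ℝ ∞ f)
    (hG : ∀ q, ContDiff ℝ ∞ (G q)) (h : Set.EqOn (Δ (Δ f)) (divForm l G) s) :
    Set.EqOn (Δ (Δ fun x => L (f x))) (divForm l fun q x => L (G q x)) s := by
  rw [laplacian_clm_comp L hf, laplacian_clm_comp L (contDiff_laplacian hf),
    divForm_clm_comp L hG l]
  exact fun x hx => congrArg L (h hx)

theorem bilaplacian_iteratedFDeriv_eqOn (hs : IsOpen s) (hf : ContDiff ℝ ∞ f)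
    (hG : ∀ q, ContDiff ℝ ∞ (G q)) (h : Set.EqOn (Δ (Δ f)) (divForm l G) s) (n : ℕ) :
    Set.EqOn (Δ (Δ (iteratedFDeriv ℝ n f))) (divForm l fun q => iteratedFDeriv ℝ n (G q)) s := by
  induction n with
  | zero =>
    let L := (continuousMultilinearCurryFin0 ℝ E V).symm.toContinuousLinearEquiv
    exact bilaplacian_clm_comp_eqOn (L : V →L[ℝ] E [×0]→L[ℝ] V) hf hG h
  | succ n ih =>
    let L := (continuousMultilinearCurryLeftEquiv ℝ (fun _ : Fin (n + 1) => E)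
      V).symm.toContinuousLinearEquiv
    have hf' := contDiff_iteratedFDeriv hf n
    have hG' q := contDiff_iteratedFDeriv (hG q) n
    have := bilaplacian_clm_comp_eqOn (L : (E →L[ℝ] E [×n]→L[ℝ] V) →L[ℝ] E [×n + 1]→L[ℝ] V)
      (contDiff_fderiv hf') (fun q => contDiff_fderiv (hG' q))
      (bilaplacian_fderiv_eqOn hs hf' hG' ih)
    simp only [iteratedFDeriv_succ_eq_comp_left]
    exact this

variable {ψ φ : E → ℝ} {ε B : ℝ} {x : E}

section Measure

variable [MeasurableSpace E] [BorelSpace E]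

theorem smul_avg_divForm (hψ : ContDiff ℝ ∞ ψ) (hc : HasCompactSupport ψ)
    (hG : ∀ q, ContDiff ℝ ∞ (G q)) {n : ℕ} (hl : ∀ q, (l q).length = n) (t : ℝ) (x : E) :
    t ^ n • avg ψ (divForm l G) t x = ∑ q, avg (iterDirDeriv (l q).reverse ψ) (G q) t x := by
  unfold divForm
  rw [avg_sum_right hψ.continuous hc fun q => (contDiff_iterDirDeriv (hG q) _).continuous,
    Finset.smul_sum]
  exact Finset.sum_congr rfl fun q _ => by
    rw [← smul_avg_iterDirDeriv hψ hc (hG q), hl q]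

variable [CompleteSpace V]

theorem IsAveragingKernel.norm_avg_sub_le (h : IsAveragingKernel ψ φ)
    (hl : ∀ q, (l q).length = 3) (hf : ContDiff ℝ ∞ f) (hG : ∀ q, ContDiff ℝ ∞ (G q))
    (hε : 0 ≤ ε) (hfG : Set.EqOn (Δ (Δ f)) (divForm l G) (closedBall x ε))
    (hB : ∀ q, ∀ y ∈ closedBall x ε, ‖G q y‖ ≤ B) :
    ‖avg φ f ε x - f x‖ ≤ (∑ q, ∫ z, ‖iterDirDeriv (l q).reverse ψ z‖) * B * ε := by
  have hψ := h.contDiff_potential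
  have hψs := h.tsupport_potential_subset
  have hderiv : ∀ t ∈ Set.Ico 0 ε, ‖t ^ 3 • avg ψ (Δ (Δ f)) t x‖ ≤
      (∑ q, ∫ z, ‖iterDirDeriv (l q).reverse ψ z‖) * B := fun t ht => by
    have hsub : closedBall x t ⊆ closedBall x ε := closedBall_subset_closedBall ht.2.le
    rw [avg_congr hψs ht.1 (hfG.mono hsub), smul_avg_divForm hψ
      (hasCompactSupport_of_tsupport_subset_closedBall hψs) hG hl, Finset.sum_mul]
    exact norm_sum_le_of_le _ fun q _ => norm_avg_le (contDiff_iterDirDeriv hψ _).continuous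
      ((tsupport_iterDirDeriv_subset ψ _).trans hψs) ht.1 fun y hy => hB q y (hsub hy)
  have := norm_image_sub_le_of_norm_deriv_le_segment'
    (fun t _ => (h.hasDerivAt_avg hf t x).hasDerivWithinAt) hderiv ε ⟨hε, le_rfl⟩
  rwa [avg_zero_right h.integral_eq_one, sub_zero] at this

theorem IsAveragingKernel.norm_fderiv_le (h : IsAveragingKernel ψ φ)
    (hl : ∀ q, (l q).length = 3) (hf : ContDiff ℝ ∞ f) (hG : ∀ q, ContDiff ℝ ∞ (G q))
    (hs : IsOpen s) (hfG : Set.EqOn (Δ (Δ f)) (divForm l G) s) (hε : 0 < ε)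
    (hεs : closedBall x ε ⊆ s) {B₀ B₁ : ℝ} (hB₀ : ∀ y ∈ closedBall x ε, ‖f y‖ ≤ B₀)
    (hB₁ : ∀ q, ∀ y ∈ closedBall x ε, ‖fderiv ℝ (G q) y‖ ≤ B₁) :
    ‖fderiv ℝ f x‖ ≤ (∫ z, ‖fderiv ℝ φ z‖) * (B₀ / ε) +
      (∑ q, ∫ z, ‖iterDirDeriv (l q).reverse ψ z‖) * B₁ * ε := by
  have hsub := h.norm_avg_sub_le hl (contDiff_fderiv hf) (fun q => contDiff_fderiv (hG q)) hε.le
    ((bilaplacian_fderiv_eqOn hs hf hG hfG).mono hεs) hB₁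
  have havg := norm_avg_fderiv_le h.contDiff h.tsupport_subset hf hε hB₀
  calc ‖fderiv ℝ f x‖ ≤ ‖avg φ (fderiv ℝ f) ε x‖ + ‖avg φ (fderiv ℝ f) ε x - fderiv ℝ f x‖ := by
        simpa using norm_sub_le (avg φ (fderiv ℝ f) ε x) (avg φ (fderiv ℝ f) ε x - fderiv ℝ f x)
    _ ≤ _ := add_le_add havg hsub

end Measure

theorem exists_norm_iteratedFDeriv_succ_le [CompleteSpace V] (hl : ∀ q, (l q).length = 3) :
    ∃ C ≥ 0, ∀ {f : E → V} {G : ι → E → V} {s : Set E} {x : E} {ε B₀ B₁ : ℝ} {n : ℕ},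
      ContDiff ℝ ∞ f → (∀ q, ContDiff ℝ ∞ (G q)) → IsOpen s →
      Set.EqOn (Δ (Δ f)) (divForm l G) s → 0 < ε → closedBall x ε ⊆ s →
      (∀ y ∈ closedBall x ε, ‖iteratedFDeriv ℝ n f y‖ ≤ B₀) →
      0 ≤ B₁ → (∀ q, ∀ y ∈ closedBall x ε, ‖iteratedFDeriv ℝ (n + 1) (G q) y‖ ≤ B₁) →
      ‖iteratedFDeriv ℝ (n + 1) f x‖ ≤ C * (B₀ / ε + ε * B₁) := by
  borelize E
  obtain ⟨ψ, φ, hφ⟩ := exists_isAveragingKernel (E := E)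
  set C₀ := ∫ z, ‖fderiv ℝ φ z‖
  set C₁ := ∑ q, ∫ z, ‖iterDirDeriv (l q).reverse ψ z‖
  have hC₀ : 0 ≤ C₀ := by positivity
  have hC₁ : 0 ≤ C₁ := by positivity
  refine ⟨C₀ + C₁, by positivity, ?_⟩
  intro f G s x ε B₀ B₁ n hf hG hs hfG hε hεs hfB hB₁ hGB
  have hB₀ : 0 ≤ B₀ := (norm_nonneg _).trans (hfB x (mem_closedBall_self hε.le))
  simp only [← norm_fderiv_iteratedFDeriv] at hGB ⊢
  have key := hφ.norm_fderiv_le hl (contDiff_iteratedFDeriv hf n)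
    (fun q => contDiff_iteratedFDeriv (hG q) n) hs
    (bilaplacian_iteratedFDeriv_eqOn hs hf hG hfG n) hε hεs hfB hGB
  calc _ ≤ C₀ * (B₀ / ε) + C₁ * B₁ * ε := key
    _ ≤ (C₀ + C₁) * (B₀ / ε) + (C₀ + C₁) * B₁ * ε := by
        gcongr <;> linarith
    _ = (C₀ + C₁) * (B₀ / ε + ε * B₁) := by ring

end Interior

section Absorption

variable {X : Type*} [PseudoMetricSpace X] {F : X → ℝ} {x₀ x y : X} {R G H K K₀ : ℝ}

theorem sub_dist_mul_le_of_isMaxOn (hx : dist x x₀ < R) (hF : ∀ y, 0 ≤ F y)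
    (hmax : IsMaxOn (fun y => (R - dist y x₀) * F y) (closedBall x₀ R) x)
    (hH : 0 ≤ H) (hK : 0 ≤ K) (hKR : K * R ≤ K₀)
    (h : ∀ x ε S, 0 < ε → dist x x₀ + ε ≤ R → (∀ y ∈ closedBall x ε, F y ≤ S) →
      F x ≤ G / ε + ε * (H + K * S)) :
    (R - dist x x₀) * F x ≤ (8 * K₀ + 4) * G + R ^ 2 * H := by
  set d := R - dist x x₀
  set S := d * F x
  have hd₀ : 0 < d := sub_pos.2 hx
  have hdR : d ≤ R := sub_le_self _ dist_nonneg
  have hKd : K * d ≤ K₀ := (mul_le_mul_of_nonneg_left hdR hK).trans hKR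
  have hK₀ : 0 ≤ K₀ := (by positivity : 0 ≤ K * d).trans hKd
  have hS₀ : 0 ≤ S := mul_nonneg hd₀.le (hF x)
  -- at scale `θ d` the term `K * S` of the estimate contributes at most `S / 2`
  set θ := (4 * K₀ + 2)⁻¹
  have hθ₀ : 0 < θ := by positivity
  have hθK : θ * (4 * K₀ + 2) = 1 := inv_mul_cancel₀ (by positivity)
  have hθ₂ : θ ≤ 1 / 2 := by nlinarith
  have hloc : ∀ y ∈ closedBall x (θ * d), F y ≤ 2 * S / d := fun y hy => by
    have hyx : dist y x ≤ θ * d := hy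
    have hyx₀ : d / 2 ≤ R - dist y x₀ := by nlinarith [dist_triangle y x x₀]
    have hyS : (R - dist y x₀) * F y ≤ S := hmax (mem_closedBall.2 (by linarith))
    rw [le_div_iff₀ hd₀]
    nlinarith [hF y]
  have key : F x ≤ G / (θ * d) + θ * d * (H + K * (2 * S / d)) :=
    h x (θ * d) (2 * S / d) (by positivity) (by nlinarith) hloc
  have hS_le : S ≤ (4 * K₀ + 2) * G + θ * d ^ 2 * H + 2 * θ * (K * d) * S := by
    refine (mul_le_mul_of_nonneg_left key hd₀.le).trans_eq ?_
    rw [show 4 * K₀ + 2 = θ⁻¹ from (inv_inv _).symm]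
    field_simp
    ring
  have hH_le : θ * d ^ 2 * H ≤ 1 / 2 * R ^ 2 * H := by gcongr
  have hθKd : 2 * θ * (K * d) ≤ 1 / 2 := by nlinarith
  nlinarith [mul_le_mul_of_nonneg_right hθKd hS₀]

theorem le_of_forall_le_div_add_mul [ProperSpace X] (hFc : Continuous F) (hF : ∀ y, 0 ≤ F y)
    (hR : 0 < R) (hG : 0 ≤ G) (hH : 0 ≤ H) (hK : 0 ≤ K) (hKR : K * R ≤ K₀)
    (h : ∀ x ε S, 0 < ε → dist x x₀ + ε ≤ R → (∀ y ∈ closedBall x ε, F y ≤ S) →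
      F x ≤ G / ε + ε * (H + K * S)) (hy : y ∈ closedBall x₀ (R / 2)) :
    F y ≤ (16 * K₀ + 8) * G / R + 2 * R * H := by
  have hK₀ : 0 ≤ K₀ := (by positivity : 0 ≤ K * R).trans hKR
  obtain ⟨x, hx, hmax⟩ := (isCompact_closedBall x₀ R).exists_isMaxOn
    ⟨x₀, mem_closedBall_self hR.le⟩ (f := fun y => (R - dist y x₀) * F y) (by fun_prop)
  have hweighted : (R - dist x x₀) * F x ≤ (8 * K₀ + 4) * G + R ^ 2 * H := by
    rcases (mem_closedBall.1 hx).eq_or_lt with hd | hd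
    · rw [hd, sub_self, zero_mul]
      positivity
    · exact sub_dist_mul_le_of_isMaxOn hd hF hmax hH hK hKR h
  have hy' : dist y x₀ ≤ R / 2 := hy
  have hymax : (R - dist y x₀) * F y ≤ (R - dist x x₀) * F x :=
    hmax (mem_closedBall.2 (by linarith))
  have hy_le : R / 2 * F y ≤ (R - dist y x₀) * F y :=
    mul_le_mul_of_nonneg_right (by linarith) (hF y)
  calc F y ≤ ((8 * K₀ + 4) * G + R ^ 2 * H) / (R / 2) :=
        (le_div_iff₀' (by positivity)).2 (hy_le.trans (hymax.trans hweighted))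
    _ = (16 * K₀ + 8) * G / R + 2 * R * H := by
        field_simp
        ring

end Absorption

section Quadratic

theorem norm_iteratedFDeriv_succ_bilinear_le {E V₁ V₂ V₃ : Type*}
    [NormedAddCommGroup E] [NormedSpace ℝ E] [NormedAddCommGroup V₁] [NormedSpace ℝ V₁]
    [NormedAddCommGroup V₂] [NormedSpace ℝ V₂] [NormedAddCommGroup V₃] [NormedSpace ℝ V₃]
    (Q : V₁ →L[ℝ] V₂ →L[ℝ] V₃) {f : E → V₁} {g : E → V₂} (hf : ContDiff ℝ ∞ f)
    (hg : ContDiff ℝ ∞ g) {x : E} {n : ℕ} {r N S : ℝ} (hr : 0 < r) (hN : 0 ≤ N) (hS : 0 ≤ S)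
    (hfN : ∀ j ≤ n, ‖iteratedFDeriv ℝ j f x‖ ≤ N / r ^ j)
    (hgN : ∀ j ≤ n, ‖iteratedFDeriv ℝ j g x‖ ≤ N / r ^ j)
    (hfS : ‖iteratedFDeriv ℝ (n + 1) f x‖ ≤ S) (hgS : ‖iteratedFDeriv ℝ (n + 1) g x‖ ≤ S) :
    ‖iteratedFDeriv ℝ (n + 1) (fun y => Q (f y) (g y)) x‖ ≤
      ‖Q‖ * 2 ^ (n + 1) * (N * S + N ^ 2 / r ^ (n + 1)) := by
  have hterm : ∀ i ≤ n + 1, ‖iteratedFDeriv ℝ i f x‖ * ‖iteratedFDeriv ℝ (n + 1 - i) g x‖ ≤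
      N * S + N ^ 2 / r ^ (n + 1) := fun i hi => by
    have hNS : 0 ≤ N * S := by positivity
    have hNN : 0 ≤ N ^ 2 / r ^ (n + 1) := by positivity
    rcases i.eq_zero_or_pos with rfl | hi₀
    · have := mul_le_mul (hfN 0 n.zero_le) hgS (norm_nonneg _) (by positivity)
      rw [pow_zero, div_one] at this
      exact this.trans (le_add_of_nonneg_right hNN)
    rcases hi.eq_or_lt with rfl | hi₁
    · have := mul_le_mul hfS (hgN 0 n.zero_le) (norm_nonneg _) hS
      rw [pow_zero, div_one, mul_comm S] at this
      rw [Nat.sub_self]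
      exact this.trans (le_add_of_nonneg_right hNN)
    · have := mul_le_mul (hfN i (by omega)) (hgN (n + 1 - i) (by omega)) (norm_nonneg _)
        (by positivity)
      rw [div_mul_div_comm, ← pow_add, Nat.add_sub_cancel' hi, ← sq] at this
      exact this.trans (le_add_of_nonneg_left hNS)
  have hsum : (2 : ℝ) ^ (n + 1) = ∑ i ∈ Finset.range (n + 1 + 1), ((n + 1).choose i : ℝ) := by
    exact_mod_cast (Nat.sum_range_choose (n + 1)).symm
  refine (Q.norm_iteratedFDeriv_le_of_bilinear hf hg x (by exact_mod_cast le_top)).trans ?_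
  rw [mul_assoc, hsum, Finset.sum_mul]
  refine mul_le_mul_of_nonneg_left (Finset.sum_le_sum fun i hi => ?_) (norm_nonneg Q)
  rw [mul_assoc]
  gcongr
  exact hterm i (Nat.lt_succ_iff.1 (Finset.mem_range.1 hi))

variable {ι E V : Type*} [Fintype ι] [NormedAddCommGroup E] [InnerProductSpace ℝ E]
  [FiniteDimensional ℝ E] [NormedAddCommGroup V] [NormedSpace ℝ V] [CompleteSpace V]
  {l : ι → List E}

theorem exists_norm_iteratedFDeriv_succ_le_of_quadratic (hl : ∀ q, (l q).length = 3)
    (Q : ι → V →L[ℝ] V →L[ℝ] V) (n : ℕ) :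
    ∃ C ≥ 0, ∀ {u : E → V} {s : Set E} {x : E} {r ε N S : ℝ}, ContDiff ℝ ∞ u → IsOpen s →
      Set.EqOn (Δ (Δ u)) (divForm l fun q y => Q q (u y) (u y)) s → 0 < r → 0 < ε →
      closedBall x ε ⊆ s → (∀ j ≤ n, ∀ y ∈ closedBall x ε, ‖iteratedFDeriv ℝ j u y‖ ≤ N / r ^ j) →
      (∀ y ∈ closedBall x ε, ‖iteratedFDeriv ℝ (n + 1) u y‖ ≤ S) →
      ‖iteratedFDeriv ℝ (n + 1) u x‖ ≤
        C * (N / r ^ n / ε + ε * (N ^ 2 / r ^ (n + 1) + N * S)) := by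
  obtain ⟨C, hC, hlin⟩ := exists_norm_iteratedFDeriv_succ_le (V := V) hl
  set A := 1 + (∑ q, ‖Q q‖) * 2 ^ (n + 1)
  have hA : 1 ≤ A := le_add_of_nonneg_right (by positivity)
  refine ⟨C * A, by positivity, ?_⟩
  intro u s x r ε N S hu hs hΔ hr hε hεs hN hS
  have hx := mem_closedBall_self (x := x) hε.le
  have hN₀ : 0 ≤ N := by simpa using (norm_nonneg _).trans (hN 0 n.zero_le x hx)
  have hS₀ : 0 ≤ S := (norm_nonneg _).trans (hS x hx)
  have hQ (q : ι) : ContDiff ℝ ∞ fun y => Q q (u y) (u y) :=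
    ((Q q).contDiff.comp hu).clm_apply hu
  have hflux : ∀ q, ∀ y ∈ closedBall x ε,
      ‖iteratedFDeriv ℝ (n + 1) (fun y => Q q (u y) (u y)) y‖ ≤
        A * (N ^ 2 / r ^ (n + 1) + N * S) := fun q y hy => by
    refine (norm_iteratedFDeriv_succ_bilinear_le (Q q) hu hu hr hN₀ hS₀ (fun j hj => hN j hj y hy)
      (fun j hj => hN j hj y hy) (hS y hy) (hS y hy)).trans ?_
    rw [add_comm (N * S)]
    gcongr
    refine le_add_of_nonneg_of_le zero_le_one ?_
    gcongr
    exact Finset.single_le_sum (f := fun q => ‖Q q‖) (fun q _ => norm_nonneg (Q q))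
      (Finset.mem_univ q)
  calc _ ≤ C * (N / r ^ n / ε + ε * (A * (N ^ 2 / r ^ (n + 1) + N * S))) :=
        hlin hu hQ hs hΔ hε hεs (hN n le_rfl) (by positivity) hflux
    _ ≤ C * (A * (N / r ^ n / ε) + ε * (A * (N ^ 2 / r ^ (n + 1) + N * S))) := by
        gcongr
        exact le_mul_of_one_le_left (by positivity) hA
    _ = C * A * (N / r ^ n / ε + ε * (N ^ 2 / r ^ (n + 1) + N * S)) := by ring

theorem exists_norm_iteratedFDeriv_succ_le_of_forall_le (hl : ∀ q, (l q).length = 3)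
    (Q : ι → V →L[ℝ] V →L[ℝ] V) (n : ℕ) {M a : ℝ} (hM : 0 ≤ M) (ha : 0 < a) :
    ∃ c ≥ 0, ∀ {u : E → V} {x₀ : E} {r N : ℝ}, ContDiff ℝ ∞ u → 0 < r → N * r ≤ M →
      Set.EqOn (Δ (Δ u)) (divForm l fun q x => Q q (u x) (u x)) (ball x₀ (2 * (a * r))) →
      (∀ j ≤ n, ∀ y ∈ closedBall x₀ (a * r), ‖iteratedFDeriv ℝ j u y‖ ≤ N / r ^ j) →
      ∀ y ∈ closedBall x₀ (a * r / 2), ‖iteratedFDeriv ℝ (n + 1) u y‖ ≤ c * N / r ^ (n + 1) := by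
  obtain ⟨C, hC, hquad⟩ := exists_norm_iteratedFDeriv_succ_le_of_quadratic (V := V) hl Q n
  refine ⟨(16 * (C * a * M) + 8) * C / a + 2 * a * C * M, by positivity, ?_⟩
  intro u x₀ r N hu hr hNr hΔ hN y hy
  have hN₀ : 0 ≤ N := by
    simpa using (norm_nonneg _).trans (hN 0 n.zero_le x₀ (mem_closedBall_self (by positivity)))
  have hlocal : ∀ x ε S, 0 < ε → dist x x₀ + ε ≤ a * r →
      (∀ y ∈ closedBall x ε, ‖iteratedFDeriv ℝ (n + 1) u y‖ ≤ S) →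
      ‖iteratedFDeriv ℝ (n + 1) u x‖ ≤
        C * N / r ^ n / ε + ε * (C * N ^ 2 / r ^ (n + 1) + C * N * S) := by
    intro x ε S hε hxε hS
    have hsub : closedBall x ε ⊆ closedBall x₀ (a * r) :=
      closedBall_subset_closedBall' (by linarith)
    refine (hquad hu isOpen_ball hΔ hr hε
      (hsub.trans (closedBall_subset_ball (lt_two_mul_self (by positivity))))
      (fun j hj y hy => hN j hj y (hsub hy)) hS).trans_eq ?_
    ring
  have habsorb := le_of_forall_le_div_add_mul (contDiff_iteratedFDeriv hu _).continuous.norm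
    (fun _ => norm_nonneg _) (by positivity) (by positivity) (by positivity) (by positivity)
    (K₀ := C * a * M)
    (by nlinarith [mul_le_mul_of_nonneg_left hNr (by positivity : 0 ≤ C * a)]) hlocal hy
  calc _ ≤ _ := habsorb
    _ = (16 * (C * a * M) + 8) * C / a * N / r ^ (n + 1) +
        2 * a * C * (N * r) * N / r ^ (n + 1) := by
        field_simp
        ring
    _ ≤ (16 * (C * a * M) + 8) * C / a * N / r ^ (n + 1) + 2 * a * C * M * N / r ^ (n + 1) := by
        gcongr
    _ = _ := by ring

theorem exists_norm_iteratedFDeriv_le_of_quadratic (hl : ∀ q, (l q).length = 3)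
    (Q : ι → V →L[ℝ] V →L[ℝ] V) {M : ℝ} (hM : 0 ≤ M) (k : ℕ) :
    ∃ c ≥ 1, ∀ {u : E → V} {x₀ : E} {r N : ℝ}, ContDiff ℝ ∞ u → 0 < r → N * r ≤ M →
      Set.EqOn (Δ (Δ u)) (divForm l fun q x => Q q (u x) (u x)) (ball x₀ r) →
      (∀ y ∈ ball x₀ r, ‖u y‖ ≤ N) →
      ∀ j ≤ k, ∀ y ∈ closedBall x₀ (r / 2 ^ (k + 1)), ‖iteratedFDeriv ℝ j u y‖ ≤ c * N / r ^ j := by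
  induction k with
  | zero =>
    refine ⟨1, le_rfl, fun {u x₀ r N} _ hr _ _ hN j hj y hy => ?_⟩
    obtain rfl : j = 0 := by omega
    simpa using hN y (closedBall_subset_ball (by simpa using hr) hy)
  | succ k ih =>
    obtain ⟨c, hc, ih⟩ := ih
    have hc₀ : 0 ≤ c := zero_le_one.trans hc
    obtain ⟨c', hc', hsucc⟩ := exists_norm_iteratedFDeriv_succ_le_of_forall_le (V := V) hl Q k
      (mul_nonneg hc₀ hM) (a := 1 / 2 ^ (k + 1)) (by positivity)
    refine ⟨c + c' * c, by nlinarith, fun {u x₀ r N} hu hr hNr hΔ hN j hj y hy => ?_⟩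
    have hN₀ : 0 ≤ N := (norm_nonneg _).trans (hN x₀ (mem_ball_self hr))
    have hlow := ih hu hr hNr hΔ hN
    have hradius : 1 / 2 ^ (k + 1) * r = r / 2 ^ (k + 1) := one_div_mul_eq_div _ _
    have hhalf : r / 2 ^ (k + 1) / 2 = r / 2 ^ (k + 1 + 1) := by rw [div_div, ← pow_succ]
    rcases Nat.le_succ_iff.1 hj with hj | rfl
    · refine (hlow j hj y (closedBall_subset_closedBall ?_ hy)).trans ?_
      · exact hhalf ▸ half_le_self (by positivity)
      · gcongr
        exact le_add_of_nonneg_right (by positivity)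
    · have hball : 2 * (r / 2 ^ (k + 1)) ≤ r := by
        rw [pow_succ]
        field_simp
        exact one_le_pow₀ one_le_two
      have := hsucc hu hr (N := c * N) (by nlinarith)
        (hΔ.mono (ball_subset_ball (hradius ▸ hball))) (by rwa [hradius]) y
        (by rwa [hradius, hhalf])
      refine this.trans ?_
      rw [← mul_assoc]
      gcongr
      exact le_add_of_nonneg_left hc₀

end Quadratic

section Pressure

variable {ι E : Type*} [Fintype ι] [NormedAddCommGroup E] [InnerProductSpace ℝ E]
  {u v : E → E} {p : E → ℝ} {s : Set E}

/-- The divergence of a vector field, as the trace of its derivative. -/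
def divergence (v : E → E) (x : E) : ℝ := LinearMap.trace ℝ E (fderiv ℝ v x)

theorem divergence_eq_sum_inner (b : OrthonormalBasis ι ℝ E) (v : E → E) (x : E) :
    divergence v x = ∑ i, inner ℝ (b i) (dirDeriv (b i) v x) :=
  LinearMap.trace_eq_sum_inner _ b

theorem divForm_inner_smul (b : OrthonormalBasis ι ℝ E) (hu : ContDiff ℝ ∞ u) (x : E) :
    divForm (fun k => [b k]) (fun k y => inner ℝ (b k) (u y) • u y) x =
      fderiv ℝ u x (u x) + divergence u x • u x := by
  have hb k : ContDiff ℝ ∞ fun y => inner ℝ (b k) (u y) := contDiff_const.inner ℝ hu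
  have hdb k := congrFun (dirDeriv_clm_comp (innerSL ℝ (b k)) hu (b k)) x
  simp only [innerSL_apply_apply] at hdb
  calc _ = ∑ k, (inner ℝ (b k) (u x) • dirDeriv (b k) u x +
        inner ℝ (b k) (dirDeriv (b k) u x) • u x) :=
        Finset.sum_congr rfl fun k _ => by
          rw [← hdb]
          exact congrFun (dirDeriv_smul (hb k) hu (b k)) x
    _ = fderiv ℝ u x (u x) + divergence u x • u x := by
        rw [Finset.sum_add_distrib, ← Finset.sum_smul, divergence_eq_sum_inner b]
        conv_rhs => enter [1, 2]; rw [← b.sum_repr' (u x)]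
        simp only [map_sum, map_smul, dirDeriv]

variable [FiniteDimensional ℝ E]

/-- `u` and `p` solve the steady incompressible Navier–Stokes equations with unit viscosity
on `s`. -/
structure IsSteadyNavierStokes (s : Set E) (u : E → E) (p : E → ℝ) : Prop where
  momentum : ∀ x ∈ s, -Δ u x + fderiv ℝ u x (u x) + ∇ p x = 0
  incompressible : ∀ x ∈ s, divergence u x = 0

theorem IsSteadyNavierStokes.mono {t : Set E} (h : IsSteadyNavierStokes t u p) (hst : s ⊆ t) :
    IsSteadyNavierStokes s u p :=
  ⟨fun x hx => h.momentum x (hst hx), fun x hx => h.incompressible x (hst hx)⟩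

theorem IsSteadyNavierStokes.congr {q : E → ℝ} (h : IsSteadyNavierStokes s u p) (hs : IsOpen s)
    (huv : Set.EqOn u v s) (hpq : Set.EqOn p q s) : IsSteadyNavierStokes s v q where
  momentum x hx := by
    have huv' := huv.eventuallyEq_of_mem (hs.mem_nhds hx)
    have hpq' := hpq.eventuallyEq_of_mem (hs.mem_nhds hx)
    rw [← laplacian_eqOn hs huv hx, ← huv'.fderiv_eq, ← huv hx, ← hpq'.gradient_eq]
    exact h.momentum x hx
  incompressible x hx := by
    rw [divergence, ← (huv.eventuallyEq_of_mem (hs.mem_nhds hx)).fderiv_eq]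
    exact h.incompressible x hx

theorem exists_clm_divergence_eq :
    ∃ D : (E →L[ℝ] E) →L[ℝ] ℝ, ∀ v : E → E, divergence v = fun x => D (fderiv ℝ v x) := by
  have b := stdOrthonormalBasis ℝ E
  refine ⟨∑ i, (innerSL ℝ (b i)).comp (.apply ℝ E (b i)), fun v => ?_⟩
  ext x
  simp [divergence_eq_sum_inner b, dirDeriv]

theorem contDiff_gradient (hp : ContDiff ℝ ∞ p) : ContDiff ℝ ∞ (∇ p) :=
  (InnerProductSpace.toDual ℝ E).symm.contDiff.comp (contDiff_fderiv hp)

theorem divergence_gradient (hp : ContDiff ℝ ∞ p) : divergence (∇ p) = Δ p := by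
  have b := stdOrthonormalBasis ℝ E
  ext x
  rw [divergence_eq_sum_inner b, laplacian_eq_sum_dirDeriv b hp]
  refine Finset.sum_congr rfl fun i _ => ?_
  have := dirDeriv_clm_comp (innerSL ℝ (b i)) (contDiff_gradient hp) (b i)
  simp only [innerSL_apply_apply, inner_gradient_right] at this
  exact (congrFun this x).symm

theorem laplacian_gradient (hp : ContDiff ℝ ∞ p) : Δ (∇ p) = ∇ (Δ p) := by
  ext1 x
  refine ext_inner_left ℝ fun w => ?_
  have := laplacian_clm_comp (innerSL ℝ w) (contDiff_gradient hp)
  simp only [innerSL_apply_apply, inner_gradient_right] at this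
  rw [inner_gradient_right, fderiv_laplacian hp]
  exact (congrFun this x).symm.trans
    (congrFun (laplacian_clm_comp (.apply ℝ ℝ w) (contDiff_fderiv hp)) x)

theorem divergence_laplacian (hv : ContDiff ℝ ∞ v) : divergence (Δ v) = Δ (divergence v) := by
  obtain ⟨D, hD⟩ := exists_clm_divergence_eq (E := E)
  rw [hD, hD, fderiv_laplacian hv, laplacian_clm_comp D (contDiff_fderiv hv)]

theorem IsSteadyNavierStokes.laplacian_eq (b : OrthonormalBasis ι ℝ E)
    (h : IsSteadyNavierStokes s u p) (hu : ContDiff ℝ ∞ u) :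
    Set.EqOn (Δ u) (fun x =>
      divForm (fun k => [b k]) (fun k y => inner ℝ (b k) (u y) • u y) x + ∇ p x) s := fun x hx => by
  have := h.momentum x hx
  rw [neg_add_eq_sub, sub_add_eq_add_sub, sub_eq_zero] at this
  beta_reduce
  rw [divForm_inner_smul b hu, h.incompressible x hx, zero_smul, add_zero, this]

/-- The matrices of the constant-coefficient operator
`∑ i j, ∂ᵢ ∂ⱼ (Aᵢⱼ v) = Δ v - ∇ (div v)`, which in dimension three is `-curl curl`. It annihilates
gradients and agrees with `Δ` on divergence-free fields. -/
def curlCurlMatrix [DecidableEq ι] (b : OrthonormalBasis ι ℝ E) (i j : ι) : E →L[ℝ] E :=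
  (if i = j then .id ℝ E else 0) - (innerSL ℝ (b j)).smulRight (b i)

theorem gradient_divergence (b : OrthonormalBasis ι ℝ E) (hv : ContDiff ℝ ∞ v) (x : E) :
    ∇ (divergence v) x =
      ∑ i, ∑ j, inner ℝ (b j) (dirDeriv (b i) (dirDeriv (b j) v) x) • b i := by
  have hv' j := contDiff_dirDeriv hv (b j)
  have hinner i j := dirDeriv_clm_comp (innerSL ℝ (b j)) (hv' j) (b i)
  simp only [innerSL_apply_apply] at hinner
  rw [← b.sum_repr' (∇ (divergence v) x)]
  refine Finset.sum_congr rfl fun i _ => ?_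
  rw [inner_gradient_right, ← Finset.sum_smul, funext (divergence_eq_sum_inner b v)]
  congr 1
  refine (congrFun (dirDeriv_sum (fun j => contDiff_const.inner ℝ (hv' j)) (b i)) x).trans ?_
  exact Finset.sum_congr rfl fun j _ => congrFun (hinner i j) x

variable [DecidableEq ι]

theorem divForm_curlCurlMatrix (b : OrthonormalBasis ι ℝ E) (hv : ContDiff ℝ ∞ v) :
    divForm (fun q : ι × ι => [b q.1, b q.2]) (fun q x => curlCurlMatrix b q.1 q.2 (v x)) =
      fun x => Δ v x - ∇ (divergence v) x := by
  ext1 x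
  rw [gradient_divergence b hv, laplacian_eq_sum_dirDeriv b hv, ← Finset.sum_sub_distrib, divForm,
    Fintype.sum_prod_type]
  refine Finset.sum_congr rfl fun i _ => ?_
  simp only [iterDirDeriv_clm_comp (curlCurlMatrix b i _) hv]
  simp only [curlCurlMatrix, sub_apply, Finset.sum_sub_distrib,
    ContinuousLinearMap.smulRight_apply, innerSL_apply_apply]
  congr 1
  rw [Finset.sum_eq_single i (fun j _ hj => by simp [hj.symm]) (by simp)]
  simp [iterDirDeriv]

/-- The bilinear fluxes `Q` for which the Navier–Stokes equations imply
`Δ² u = ∑ i j k, ∂ᵢ ∂ⱼ ∂ₖ Qᵢⱼₖ(u, u)`. -/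
def navierStokesFlux (b : OrthonormalBasis ι ℝ E) (q : (ι × ι) × ι) : E →L[ℝ] E →L[ℝ] E :=
  (innerSL ℝ (b q.2)).smulRight (curlCurlMatrix b q.1.1 q.1.2)

theorem IsSteadyNavierStokes.bilaplacian_eqOn (b : OrthonormalBasis ι ℝ E)
    (h : IsSteadyNavierStokes s u p) (hs : IsOpen s) (hu : ContDiff ℝ ∞ u) (hp : ContDiff ℝ ∞ p) :
    Set.EqOn (Δ (Δ u)) (divForm (fun q : (ι × ι) × ι => [b q.1.1, b q.1.2, b q.2])
      fun q x => navierStokesFlux b q (u x) (u x)) s := by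
  have hG (k : ι) : ContDiff ℝ ∞ fun y => inner ℝ (b k) (u y) • u y :=
    (contDiff_const.inner ℝ hu).smul hu
  have hP := contDiff_divForm hG fun k => [b k]
  have hp' := contDiff_gradient hp
  have hA {v : E → E} (hv : ContDiff ℝ ∞ v) (q : ι × ι) :
      ContDiff ℝ ∞ fun x => curlCurlMatrix b q.1 q.2 (v x) :=
    (curlCurlMatrix b q.1 q.2).contDiff.comp hv
  have hdiv : Set.EqOn (divergence (Δ u)) (fun _ => 0) s := by
    rw [divergence_laplacian hu]
    exact fun y hy => (laplacian_eqOn hs h.incompressible hy).trans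
      (congrFun InnerProductSpace.laplacian_const y)
  intro x hx
  calc Δ (Δ u) x = Δ (Δ u) x - ∇ (divergence (Δ u)) x := by
        rw [(hdiv.eventuallyEq_of_mem (hs.mem_nhds hx)).gradient_eq, gradient_fun_const, sub_zero]
    _ = divForm (fun q : ι × ι => [b q.1, b q.2])
          (fun q x => curlCurlMatrix b q.1 q.2 (Δ u x)) x := by
        rw [divForm_curlCurlMatrix b (contDiff_laplacian hu)]
    _ = divForm (fun q : ι × ι => [b q.1, b q.2]) (fun q x => curlCurlMatrix b q.1 q.2
          (divForm (fun k => [b k]) (fun k y => inner ℝ (b k) (u y) • u y) x)) x +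
        divForm (fun q : ι × ι => [b q.1, b q.2])
          (fun q x => curlCurlMatrix b q.1 q.2 (∇ p x)) x := by
        rw [divForm_eqOn hs (fun q _ hy => congrArg _ (h.laplacian_eq b hu hy)) _ hx]
        simp only [map_add]
        rw [divForm_add (hA hP) (hA hp')]
    _ = _ := by
        rw [divForm_curlCurlMatrix b hp', laplacian_gradient hp, divergence_gradient hp,
          divForm_divForm hG]
        simp [navierStokesFlux]

end Pressure

section Coordinates

variable {u : E3 → E3} {p f : E3 → ℝ} {s : Set E3} {x : E3}

theorem basisFun_eq_ee (j : Fin 3) : EuclideanSpace.basisFun (Fin 3) ℝ j = ee j :=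
  EuclideanSpace.basisFun_apply (Fin 3) ℝ j

theorem inner_ee (j : Fin 3) (y : E3) : inner ℝ (ee j) y = y j := by
  simp [ee, EuclideanSpace.inner_single_left]

theorem sum_pd2_eq_laplacian (hf : ContDiffAt ℝ 2 f x) : ∑ j, pd2 f j x = Δ f x := by
  have hf' : DifferentiableAt ℝ (fderiv ℝ f) x :=
    (hf.fderiv_right (m := 1) (by norm_num)).differentiableAt one_ne_zero
  rw [InnerProductSpace.laplacian_eq_iteratedFDeriv_orthonormalBasis f
    (EuclideanSpace.basisFun (Fin 3) ℝ)]
  refine Finset.sum_congr rfl fun j _ => ?_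
  rw [iteratedFDeriv_two_apply, pd2, basisFun_eq_ee,
    fderiv_clm_apply hf' (differentiableAt_const _)]
  simp

theorem pd_apply_eq (hu : DifferentiableAt ℝ u x) (i j : Fin 3) :
    pd (fun y => u y i) j x = fderiv ℝ u x (ee j) i :=
  congrArg (· (ee j)) ((EuclideanSpace.proj (𝕜 := ℝ) i).hasFDerivAt.comp x hu.hasFDerivAt).fderiv

theorem sum_mul_pd_eq (hu : DifferentiableAt ℝ u x) (i : Fin 3) (w : E3) :
    ∑ j, w j * pd (fun y => u y i) j x = fderiv ℝ u x w i := by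
  conv_rhs => rw [← (EuclideanSpace.basisFun (Fin 3) ℝ).sum_repr' w]
  simp [pd_apply_eq hu, ee, EuclideanSpace.inner_single_left]

theorem IsNS.isSteadyNavierStokes (h : IsNS s u p) (hs : IsOpen s) (hu : ContDiffOn ℝ ∞ u s) :
    IsSteadyNavierStokes s u p := by
  have hu2 : ∀ x ∈ s, ContDiffAt ℝ 2 u x := fun x hx =>
    (hu.contDiffAt (hs.mem_nhds hx)).of_le ENat.LEInfty.out
  have hu' : ∀ x ∈ s, DifferentiableAt ℝ u x := fun x hx => (hu2 x hx).differentiableAt two_ne_zero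
  refine ⟨fun x hx => ?_, fun x hx => ?_⟩
  · ext i
    let coord : E3 →L[ℝ] ℝ := EuclideanSpace.proj i
    have hΔ : ∑ j, pd2 (fun y => u y i) j x = Δ u x i :=
      (sum_pd2_eq_laplacian (coord.contDiff.contDiffAt.comp x (hu2 x hx))).trans
        (hu2 x hx).laplacian_CLM_comp_left
    have hgrad : pd p i x = ∇ p x i := by rw [← inner_ee, inner_gradient_right, conj_trivial, pd]
    have := h.1 x hx i
    rwa [hΔ, sum_mul_pd_eq (hu' x hx), hgrad] at this
  · rw [divergence_eq_sum_inner (EuclideanSpace.basisFun (Fin 3) ℝ), ← h.2 x hx]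
    exact Finset.sum_congr rfl fun j _ => by
      rw [basisFun_eq_ee, inner_ee, pd_apply_eq (hu' x hx), dirDeriv]

end Coordinates

section Exterior

variable {E F : Type*} [NormedAddCommGroup E] [InnerProductSpace ℝ E] [FiniteDimensional ℝ E]
  [NormedAddCommGroup F] [NormedSpace ℝ F]

theorem exists_contDiff_eqOn_closedBall {f : E → F} {s : Set E} (hs : IsOpen s)
    (hf : ContDiffOn ℝ ∞ f s) {x : E} {r R : ℝ} (hr : 0 < r) (hrR : r < R)
    (hR : closedBall x R ⊆ s) :
    ∃ g : E → F, ContDiff ℝ ∞ g ∧ Set.EqOn f g (closedBall x r) := by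
  let χ : ContDiffBump x := ⟨r, R, hr, hrR⟩
  refine ⟨fun y => χ y • f y, contDiff_iff_contDiffAt.2 fun y => ?_, fun y hy => ?_⟩
  · by_cases hy : y ∈ closedBall x R
    · exact χ.contDiff.contDiffAt.smul (hf.contDiffAt (hs.mem_nhds (hR hy)))
    · refine (contDiffAt_const (c := 0)).congr_of_eventuallyEq ?_
      rw [← χ.tsupport_eq, notMem_tsupport_iff_eventuallyEq] at hy
      filter_upwards [hy] with z hz
      simp [hz]
  · simp only [χ.one_of_mem_closedBall hy, one_smul]

theorem exists_norm_iteratedFDeriv_le_of_isSteadyNavierStokes {M : ℝ} (hM : 0 ≤ M) (k : ℕ) :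
    ∃ c : ℝ, ∀ {s : Set E} {u : E → E} {p : E → ℝ} {x : E} {r N : ℝ}, IsOpen s →
      ContDiffOn ℝ ∞ u s → ContDiffOn ℝ ∞ p s → IsSteadyNavierStokes s u p → 0 < r →
      closedBall x (2 * r) ⊆ s → N * r ≤ M → (∀ y ∈ ball x r, ‖u y‖ ≤ N) →
      ‖iteratedFDeriv ℝ k u x‖ ≤ c * N / r ^ k := by
  let b := stdOrthonormalBasis ℝ E
  obtain ⟨c, -, hc⟩ :=
    exists_norm_iteratedFDeriv_le_of_quadratic (l := fun q => [b q.1.1, b q.1.2, b q.2])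
      (fun _ => rfl) (navierStokesFlux b) hM k
  refine ⟨c, fun {s u p x r N} hs hu hp h hr hxs hNr hN => ?_⟩
  have hr' : r < 2 * r := lt_two_mul_self hr
  have hball : ball x r ⊆ closedBall x r := ball_subset_closedBall
  obtain ⟨U, hU, huU⟩ := exists_contDiff_eqOn_closedBall hs hu hr hr' hxs
  obtain ⟨P, hP, hpP⟩ := exists_contDiff_eqOn_closedBall hs hp hr hr' hxs
  have hNS : IsSteadyNavierStokes (ball x r) U P :=
    (h.mono (hball.trans ((closedBall_subset_closedBall hr'.le).trans hxs))).congr isOpen_ball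
      (huU.mono hball) (hpP.mono hball)
  have huUx : u =ᶠ[𝓝 x] U := huU.eventuallyEq_of_mem (closedBall_mem_nhds x hr)
  rw [(huUx.iteratedFDeriv ℝ k).eq_of_nhds]
  exact hc hU hr hNr (hNS.bilaplacian_eqOn b isOpen_ball hU hP)
    (fun y hy => huU (hball hy) ▸ hN y hy) k le_rfl x (mem_closedBall_self (by positivity))

theorem derivative_decay_exterior_general {M : ℝ} (hM : 0 ≤ M) (k : ℕ) :
    ∃ c : ℝ, ∀ {R₀ : ℝ}, 0 < R₀ → ∀ {u : E → E} {p : E → ℝ} {Cstar : ℝ},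
      ContDiffOn ℝ ∞ u (closedBall 0 R₀)ᶜ → ContDiffOn ℝ ∞ p (closedBall 0 R₀)ᶜ →
      IsSteadyNavierStokes (closedBall 0 R₀)ᶜ u p →
      (∀ x ∈ (closedBall 0 R₀)ᶜ, ‖u x‖ ≤ Cstar / (R₀ + ‖x‖)) → Cstar ≤ M →
      ∀ x : E, 2 * R₀ ≤ ‖x‖ → ‖iteratedFDeriv ℝ k u x‖ ≤ c * Cstar / (R₀ + ‖x‖) ^ (k + 1) := by
  obtain ⟨c, hc⟩ := exists_norm_iteratedFDeriv_le_of_isSteadyNavierStokes (E := E) hM k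
  refine ⟨2 * 8 ^ k * c, fun {R₀} hR₀ {u p Cstar} hu hp hNS hdecay hCM x hx => ?_⟩
  have hx₀ : x ∈ (closedBall (0 : E) R₀)ᶜ := by
    rw [Set.mem_compl_iff, mem_closedBall_zero_iff]
    linarith
  set ρ := R₀ + ‖x‖
  have hρ₀ : 0 < ρ := by positivity
  have hC : 0 ≤ Cstar := by
    simpa using (le_div_iff₀ hρ₀).1 ((norm_nonneg _).trans (hdecay x hx₀))
  have hnorm {y : E} (hy : y ∈ closedBall x (2 * (ρ / 8))) : ‖x‖ - ρ / 4 ≤ ‖y‖ := by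
    have := norm_sub_norm_le x y
    rw [mem_closedBall, dist_comm, dist_eq_norm] at hy
    linarith
  have hball : closedBall x (2 * (ρ / 8)) ⊆ (closedBall 0 R₀)ᶜ := fun y hy => by
    rw [Set.mem_compl_iff, mem_closedBall_zero_iff]
    linarith [hnorm hy]
  have hbound : ∀ y ∈ ball x (ρ / 8), ‖u y‖ ≤ Cstar / (ρ / 2) := fun y hy => by
    have hy' : y ∈ closedBall x (2 * (ρ / 8)) :=
      ball_subset_closedBall.trans (closedBall_subset_closedBall (by linarith)) hy
    refine (hdecay y (hball hy')).trans ?_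
    gcongr
    linarith [hnorm hy']
  have hsmall : Cstar / (ρ / 2) * (ρ / 8) = Cstar / 4 := by
    field_simp
    ring
  calc ‖iteratedFDeriv ℝ k u x‖ ≤ c * (Cstar / (ρ / 2)) / (ρ / 8) ^ k :=
        hc isClosed_closedBall.isOpen_compl hu hp hNS (by positivity) hball
          (by linarith) hbound
    _ = 2 * 8 ^ k * c * Cstar / ρ ^ (k + 1) := by
        rw [div_pow]
        field_simp
        ring

end Exterior

theorem derivative_decay_exterior (M : ℝ) (hM : 0 < M) (k : ℕ) (hk : 1 ≤ k) :
    ∃ c : ℝ, ∀ R₀ : ℝ, 0 < R₀ → ∀ (u : E3 → E3) (p : E3 → ℝ) (Cstar : ℝ),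
      ContDiffOn ℝ (⊤ : ℕ∞) u (closedBall (0 : E3) R₀)ᶜ →
      ContDiffOn ℝ (⊤ : ℕ∞) p (closedBall (0 : E3) R₀)ᶜ →
      IsNS (closedBall (0 : E3) R₀)ᶜ u p →
      (∀ x ∈ (closedBall (0 : E3) R₀)ᶜ, ‖u x‖ ≤ Cstar / (R₀ + ‖x‖)) →
      Cstar ≤ M →
      ∀ x : E3, 2 * R₀ ≤ ‖x‖ →
        ‖iteratedFDeriv ℝ k u x‖ ≤ c * Cstar / (R₀ + ‖x‖) ^ (k + 1) := by
  obtain ⟨c, hc⟩ := derivative_decay_exterior_general (E := E3) hM.le k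
  exact ⟨c, fun R₀ hR₀ u p Cstar hu hp hNS =>
    hc hR₀ hu hp (hNS.isSteadyNavierStokes isClosed_closedBall.isOpen_compl hu)⟩
end
end
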